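/- Let λ ∈ [1/3, 1/2), let K ⊂ ℝ² be a nonempty compact set satisfying K = F₁(K) ∪ F₂(K) ∪ F₃(K) ∪ F₄(K) for the von Koch similarity maps with parameter λ, and let Ω be the bounded connected component of ℝ² ∖ (G₁(K) ∪ G₂(K) ∪ G₃(K)), the snowflake domain. Then Ω is a ((1/2 − λ)/λ)-John domain. -/

import Mathlib

open Metric Set MeasureTheory

noncomputable section

abbrev Plane := EuclideanSpace ℝ (Fin 2)

/-- An open axis-parallel cube in `ℝ^d` with side length `s`. -/
def IsCube {d : ℕ} (Q : Set (EuclideanSpace ℝ (Fin d))) (s : ℝ) : Prop :=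
  0 < s ∧ ∃ c : Fin d → ℝ, Q = {x | ∀ i, x i ∈ Set.Ioo (c i) (c i + s)}

/-- The curve condition with exponent `p` and constant `C`: any two points of the
complement of `Ω` can be joined by a unit-speed (1-Lipschitz) curve in the complement
along which the arclength integral of `dist(·, ∂Ω)^(1-p)` is at most `C‖z₁-z₂‖^(2-p)`. -/
def CurveCondition (Ω : Set Plane) (p C : ℝ) : Prop :=
  ∀ z₁ ∈ Ωᶜ, ∀ z₂ ∈ Ωᶜ, ∃ (L : ℝ) (γ : ℝ → Plane), 0 ≤ L ∧
    LipschitzOnWith 1 γ (Set.Icc 0 L) ∧ γ 0 = z₁ ∧ γ L = z₂ ∧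
    (∀ t ∈ Set.Icc (0:ℝ) L, γ t ∈ Ωᶜ) ∧
    (∫ t in (0:ℝ)..L, Metric.infDist (γ t) (frontier Ω) ^ (1 - p)) ≤ C * ‖z₁ - z₂‖ ^ (2 - p)

/-- `Ω` is a `J`-John domain: there is a center `x₀` such that every point can be joined
to `x₀` by a unit-speed (1-Lipschitz) curve `γ` in `Ω` with `dist(γ t, ∂Ω) ≥ J·t`. -/
def IsJohnDomain (Ω : Set Plane) (J : ℝ) : Prop :=
  ∃ x₀ ∈ Ω, ∀ x ∈ Ω, ∃ (ℓ : ℝ) (γ : ℝ → Plane), 0 ≤ ℓ ∧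
    LipschitzOnWith 1 γ (Set.Icc 0 ℓ) ∧ γ 0 = x ∧ γ ℓ = x₀ ∧
    (∀ t ∈ Set.Icc (0:ℝ) ℓ, γ t ∈ Ω ∧ J * t ≤ Metric.infDist (γ t) (frontier Ω))

/-- `Ω` is a Jordan domain: a bounded domain whose boundary is a homeomorphic
image of the circle. -/
def IsJordanDomain (Ω : Set Plane) : Prop :=
  IsOpen Ω ∧ IsConnected Ω ∧ Bornology.IsBounded Ω ∧
  ∃ f : (Metric.sphere (0 : Plane) 1) → Plane,
    Continuous f ∧ Function.Injective f ∧ Set.range f = frontier Ω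

/-- `E` is weakly mean porous with parameters `(α, lam)`: there is a pairwise disjoint
collection `D` of open cubes in the complement of `E` and a `j₀` such that for every
`x ∈ E` and `j ≥ j₀`, more than half of the scales `k ∈ {1,…,j}` admit at least `lam k`
cubes of `D` of side length at least `α(2^(-k))` inside the annulus
`B(x,2^(-k)) ∖ B(x,2^(-k-1))`. -/
def WeaklyMeanPorous {d : ℕ} (E : Set (EuclideanSpace ℝ (Fin d)))
    (α : ℝ → ℝ) (lam : ℕ → ℝ) : Prop :=
  ∃ (D : Set (Set (EuclideanSpace ℝ (Fin d)))) (j₀ : ℕ), 0 < j₀ ∧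
    (∀ Q ∈ D, (∃ s, IsCube Q s) ∧ Q ⊆ Eᶜ) ∧ D.Pairwise Disjoint ∧
    ∀ x ∈ E, ∀ j : ℕ, j₀ ≤ j →
      (j : ℝ) / 2 < ({k : ℕ | k ∈ Finset.Icc 1 j ∧
        ∃ S : Finset (Set (EuclideanSpace ℝ (Fin d))), lam k ≤ S.card ∧
          ∀ Q ∈ S, Q ∈ D ∧
            Q ⊆ Metric.ball x ((2:ℝ) ^ (-(k:ℝ))) \ Metric.ball x ((2:ℝ) ^ (-(k:ℝ) - 1)) ∧
            ∃ s, α ((2:ℝ) ^ (-(k:ℝ))) ≤ s ∧ IsCube Q s}).ncard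

/-- The point `(a,b)` of the Euclidean plane. -/
def pt (a b : ℝ) : Plane := (WithLp.equiv 2 (Fin 2 → ℝ)).symm ![a, b]

/-- Rotation of the plane by angle `τ` about the origin. -/
def rot (τ : ℝ) (x : Plane) : Plane :=
  pt (Real.cos τ * x 0 - Real.sin τ * x 1) (Real.sin τ * x 0 + Real.cos τ * x 1)

/-- The angle `θ ∈ (0,π)` with `cos θ = (1/2 - l)/l`. -/
def kochAngle (l : ℝ) : ℝ := Real.arccos ((1/2 - l) / l)

/-- The similarity maps `F₁, F₂, F₃, F₄` of the von Koch curve with parameter `l`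
(here `h = √(l - 1/4)`). -/
def kochF (l : ℝ) : Fin 4 → Plane → Plane :=
  ![fun x => l • x,
    fun x => rot (kochAngle l) (l • x) + pt l 0,
    fun x => rot (-kochAngle l) (l • x) + pt (1/2) (Real.sqrt (l - 1/4)),
    fun x => l • x + pt (1 - l) 0]

/-- The placement maps `G₁, G₂, G₃` for the snowflake domain. -/
def kochG : Fin 3 → Plane → Plane :=
  ![fun x => x,
    fun x => rot (-(2 * Real.pi / 3)) x + pt 1 0,
    fun x => rot (2 * Real.pi / 3) x + pt (1/2) (-(Real.sqrt 3 / 2))]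

/-- The union of the three placed copies of the Koch curve `K`, forming the
boundary of the snowflake. -/
def snowflakeBoundary (K : Set Plane) : Set Plane :=
  kochG 0 '' K ∪ kochG 1 '' K ∪ kochG 2 '' K


/-! ### Coordinates and similarities -/

theorem pt_zero (a b : ℝ) : pt a b 0 = a := by simp [pt]
theorem pt_one (a b : ℝ) : pt a b 1 = b := by simp [pt]

theorem plane_ext {p q : Plane} (h0 : p 0 = q 0) (h1 : p 1 = q 1) : p = q := by
  ext i; fin_cases i
  · exact h0
  · exact h1

theorem dist_sq' (p q : Plane) : dist p q ^ 2 = (p 0 - q 0) ^ 2 + (p 1 - q 1) ^ 2 := by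
  rw [EuclideanSpace.dist_eq, Real.sq_sqrt (by positivity)]
  simp [Fin.sum_univ_two, Real.dist_eq, sq_abs]

theorem dist_le_of {p q : Plane} {r : ℝ} (hr : 0 ≤ r)
    (h : (p 0 - q 0) ^ 2 + (p 1 - q 1) ^ 2 ≤ r ^ 2) : dist p q ≤ r := by
  rw [← dist_sq'] at h
  exact (le_abs_self _).trans (abs_le_of_sq_le_sq h hr)

/-- A linear functional with unit normal is `1`-Lipschitz. -/
theorem lin_bound {a b : ℝ} (hab : a ^ 2 + b ^ 2 = 1) (p q : Plane) :
    a * q 0 + b * q 1 - dist q p ≤ a * p 0 + b * p 1 := by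
  have h := dist_sq' q p
  have h2 : (a * (q 0 - p 0) + b * (q 1 - p 1)) ^ 2 ≤ dist q p ^ 2 := by
    rw [h]; nlinarith [sq_nonneg (a * (q 1 - p 1) - b * (q 0 - p 0))]
  have := (le_abs_self _).trans (abs_le_of_sq_le_sq h2 dist_nonneg)
  linarith

/-- Orientation preserving similarities of the plane. -/
def IsSim (S : Plane → Plane) (r : ℝ) : Prop :=
  0 < r ∧ ∃ a b e f : ℝ, a ^ 2 + b ^ 2 = r ^ 2 ∧
    ∀ p, S p 0 = a * p 0 - b * p 1 + e ∧ S p 1 = b * p 0 + a * p 1 + f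

theorem IsSim.comp {S S' : Plane → Plane} {r r' : ℝ} (h : IsSim S r) (h' : IsSim S' r') :
    IsSim (S ∘ S') (r' * r) := by
  obtain ⟨hr, a, b, e, f, hab, hS⟩ := h
  obtain ⟨hr', a', b', e', f', hab', hS'⟩ := h'
  refine ⟨by positivity, a * a' - b * b', a * b' + b * a', a * e' - b * f' + e,
    b * e' + a * f' + f, ?_, ?_⟩
  · rw [mul_pow, ← hab, ← hab']; ring
  · intro p
    simp only [Function.comp]
    rw [(hS _).1, (hS _).2, (hS' _).1, (hS' _).2]
    constructor <;> ring

theorem IsSim.dist_map {S : Plane → Plane} {r : ℝ} (h : IsSim S r) (p q : Plane) :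
    dist (S p) (S q) = r * dist p q := by
  obtain ⟨hr, a, b, e, f, hab, hS⟩ := h
  have : dist (S p) (S q) ^ 2 = (r * dist p q) ^ 2 := by
    rw [mul_pow, dist_sq', dist_sq', ← hab, (hS _).1, (hS _).2, (hS _).1, (hS _).2]; ring
  exact (pow_left_inj₀ dist_nonneg (by positivity) two_ne_zero).1 this

theorem IsSim.affine {S : Plane → Plane} {r : ℝ} (h : IsSim S r) (p q : Plane) (u : ℝ) :
    S (p + u • (q - p)) = S p + u • (S q - S p) := by
  obtain ⟨hr, a, b, e, f, hab, hS⟩ := h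
  apply plane_ext
  · simp [(hS _).1]; ring
  · simp [(hS _).2]; ring

theorem IsSim.exists_homeo {S : Plane → Plane} {r : ℝ} (h : IsSim S r) :
    ∃ e : Plane ≃ₜ Plane, ⇑e = S := by
  have hd := h.dist_map
  obtain ⟨hr, a, b, e, f, hab, hS⟩ := h
  have hab' : a ^ 2 + b ^ 2 ≠ 0 := by rw [hab]; positivity
  let g : Plane → Plane := fun p => pt ((a * (p 0 - e) + b * (p 1 - f)) / (a ^ 2 + b ^ 2))
    ((a * (p 1 - f) - b * (p 0 - e)) / (a ^ 2 + b ^ 2))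
  have hr1 : ∀ p, g (S p) = p := by
    intro p
    apply plane_ext
    · simp only [g, pt_zero, (hS _).1, (hS _).2]; field_simp; ring
    · simp only [g, pt_one, (hS _).1, (hS _).2]; field_simp; ring
  have hr2 : ∀ p, S (g p) = p := by
    intro p
    apply plane_ext
    · rw [(hS _).1]; simp only [g, pt_zero, pt_one]; field_simp; ring
    · rw [(hS _).2]; simp only [g, pt_zero, pt_one]; field_simp; ring
  have hSc : Continuous S :=
    (LipschitzWith.of_dist_le_mul (K := ⟨r, hr.le⟩) (fun p q => (hd p q).le)).continuous
  have hgc : Continuous g := by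
    refine (LipschitzWith.of_dist_le_mul (K := ⟨r⁻¹, by positivity⟩) (fun p q => ?_)).continuous
    have := hd (g p) (g q)
    rw [hr2, hr2] at this
    rw [this]
    show _ ≤ r⁻¹ * (r * _)
    rw [inv_mul_cancel_left₀ hr.ne']
  exact ⟨⟨⟨S, g, hr1, hr2⟩, hSc, hgc⟩, rfl⟩

theorem IsSim.injective {S : Plane → Plane} {r : ℝ} (h : IsSim S r) : Function.Injective S := by
  obtain ⟨e, rfl⟩ := h.exists_homeo; exact e.injective

theorem IsSim.surjective {S : Plane → Plane} {r : ℝ} (h : IsSim S r) : Function.Surjective S := by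
  obtain ⟨e, rfl⟩ := h.exists_homeo; exact e.surjective

theorem IsSim.isClosed_image {S : Plane → Plane} {r : ℝ} (h : IsSim S r) {A : Set Plane}
    (hA : IsClosed A) : IsClosed (S '' A) := by
  obtain ⟨e, rfl⟩ := h.exists_homeo; exact e.isClosedMap _ hA

/-! ### The parameters -/

/-- The numerical data attached to the parameter `l`: cosine and sine of the angle. -/
structure KP (l c s : ℝ) : Prop where
  l1 : 1 / 3 ≤ l
  l2 : l < 1 / 2
  lc : 2 * l * (1 + c) = 1
  c0 : 0 < c
  c1 : c ≤ 1 / 2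
  s0 : 0 < s
  cs : c ^ 2 + s ^ 2 = 1
  F0 : ∀ p, kochF l 0 p 0 = l * p 0 ∧ kochF l 0 p 1 = l * p 1
  F1 : ∀ p, kochF l 1 p 0 = l * (c * p 0 - s * p 1) + l ∧
    kochF l 1 p 1 = l * (s * p 0 + c * p 1)
  F2 : ∀ p, kochF l 2 p 0 = l * (c * p 0 + s * p 1) + 1 / 2 ∧
    kochF l 2 p 1 = l * (- s * p 0 + c * p 1) + l * s
  F3 : ∀ p, kochF l 3 p 0 = l * p 0 + (1 - l) ∧ kochF l 3 p 1 = l * p 1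

theorem KP.mk' {l : ℝ} (hl1 : 1 / 3 ≤ l) (hl2 : l < 1 / 2) :
    KP l ((1 / 2 - l) / l) (Real.sqrt (1 - ((1 / 2 - l) / l) ^ 2)) := by
  have hl : 0 < l := by linarith
  set c := (1 / 2 - l) / l with hc
  have hcl : c * l = 1 / 2 - l := by rw [hc]; field_simp
  have c0 : 0 < c := by rw [hc]; apply div_pos <;> linarith
  have c1 : c ≤ 1 / 2 := by rw [hc, div_le_iff₀ hl]; linarith
  have hpos : 0 < 1 - c ^ 2 := by nlinarith
  set s := Real.sqrt (1 - c ^ 2) with hs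
  have s0 : 0 < s := Real.sqrt_pos.2 hpos
  have hs2 : s ^ 2 = 1 - c ^ 2 := Real.sq_sqrt hpos.le
  have hcos : Real.cos (kochAngle l) = c := by
    rw [kochAngle, Real.cos_arccos] <;> linarith
  have hsin : Real.sin (kochAngle l) = s := by
    rw [kochAngle, Real.sin_arccos]
  have hsq : Real.sqrt (l - 1 / 4) = l * s := by
    rw [show l - 1 / 4 = (l * s) ^ 2 by
      rw [mul_pow, hs2]
      have : l ^ 2 * (1 - c ^ 2) = l ^ 2 - (c * l) ^ 2 := by ring
      rw [this, hcl]; ring]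
    exact Real.sqrt_sq (by positivity)
  refine ⟨hl1, hl2, by linarith, c0, c1, s0, by linarith, ?_, ?_, ?_, ?_⟩
  · intro p; simp [kochF]
  · intro p; simp [kochF, rot, pt_zero, pt_one, hcos, hsin]; constructor <;> ring
  · intro p
    simp only [kochF, Matrix.cons_val, rot, Real.cos_neg, Real.sin_neg, hcos, hsin, hsq]
    simp [pt_zero, pt_one]; constructor <;> ring
  · intro p; simp [kochF, pt_zero, pt_one]

theorem KP.lpos {l c s : ℝ} (h : KP l c s) : 0 < l := by linarith [h.l1]

theorem KP.sim {l c s : ℝ} (h : KP l c s) (i : Fin 4) : IsSim (kochF l i) l := by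
  have hcs := h.cs
  fin_cases i
  · exact ⟨h.lpos, l, 0, 0, 0, by ring, fun p => by
      have := h.F0 p; exact ⟨this.1.trans (by ring), this.2.trans (by ring)⟩⟩
  · exact ⟨h.lpos, l * c, l * s, l, 0, by linear_combination l ^ 2 * hcs, fun p => by
      have := h.F1 p; exact ⟨this.1.trans (by ring), this.2.trans (by ring)⟩⟩
  · exact ⟨h.lpos, l * c, - l * s, 1 / 2, l * s, by linear_combination l ^ 2 * hcs, fun p => by
      have := h.F2 p; exact ⟨this.1.trans (by ring), this.2.trans (by ring)⟩⟩
  · exact ⟨h.lpos, l, 0, 1 - l, 0, by ring, fun p => by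
      have := h.F3 p; exact ⟨this.1.trans (by ring), this.2.trans (by ring)⟩⟩

theorem sqrt3_sq : Real.sqrt 3 ^ 2 = 3 := Real.sq_sqrt (by norm_num)
theorem sqrt3_pos : 0 < Real.sqrt 3 := Real.sqrt_pos.2 (by norm_num)

theorem cos_23 : Real.cos (2 * Real.pi / 3) = - (1 / 2) := by
  rw [show 2 * Real.pi / 3 = Real.pi - Real.pi / 3 by ring, Real.cos_pi_sub, Real.cos_pi_div_three]

theorem sin_23 : Real.sin (2 * Real.pi / 3) = Real.sqrt 3 / 2 := by
  rw [show 2 * Real.pi / 3 = Real.pi - Real.pi / 3 by ring, Real.sin_pi_sub, Real.sin_pi_div_three]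

theorem G0 (p : Plane) : kochG 0 p = p := rfl

theorem G1 (p : Plane) : kochG 1 p 0 = - p 0 / 2 + Real.sqrt 3 / 2 * p 1 + 1 ∧
    kochG 1 p 1 = - Real.sqrt 3 / 2 * p 0 - p 1 / 2 := by
  simp only [kochG, Matrix.cons_val, rot, Real.cos_neg, Real.sin_neg, cos_23, sin_23]
  simp [pt_zero, pt_one]; constructor <;> ring

theorem G2 (p : Plane) : kochG 2 p 0 = - p 0 / 2 - Real.sqrt 3 / 2 * p 1 + 1 / 2 ∧
    kochG 2 p 1 = Real.sqrt 3 / 2 * p 0 - p 1 / 2 - Real.sqrt 3 / 2 := by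
  simp only [kochG, Matrix.cons_val, rot, cos_23, sin_23]
  simp [pt_zero, pt_one]; constructor <;> ring

theorem simG (i : Fin 3) : IsSim (kochG i) 1 := by
  have h3 := sqrt3_sq
  fin_cases i
  · exact ⟨one_pos, 1, 0, 0, 0, by ring, fun p => by
      show kochG 0 p 0 = _ ∧ kochG 0 p 1 = _
      rw [G0]; constructor <;> ring⟩
  · exact ⟨one_pos, - (1 / 2), - Real.sqrt 3 / 2, 1, 0, by linear_combination h3 / 4, fun p => by
      have := G1 p; exact ⟨this.1.trans (by ring), this.2.trans (by ring)⟩⟩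
  · exact ⟨one_pos, - (1 / 2), Real.sqrt 3 / 2, 1 / 2, - Real.sqrt 3 / 2,
      by linear_combination h3 / 4, fun p => by
      have := G2 p; exact ⟨this.1.trans (by ring), this.2.trans (by ring)⟩⟩


/-! ### The basic polygons -/

/-- The triangle containing the Koch curve. -/
def TT (c s : ℝ) : Set Plane :=
  {p | 0 ≤ p 1 ∧ (1 + c) * p 1 ≤ s * p 0 ∧ (1 + c) * p 1 ≤ s * (1 - p 0)}

/-- The closed tooth. -/
def BB (l c s : ℝ) : Set Plane :=
  {p | 0 ≤ p 1 ∧ 0 ≤ s * (p 0 - l) - c * p 1 ∧ 0 ≤ s * (1 - l - p 0) - c * p 1}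

/-- The open tooth together with its open base. -/
def BP (l c s : ℝ) : Set Plane :=
  {p | 0 ≤ p 1 ∧ 0 < s * (p 0 - l) - c * p 1 ∧ 0 < s * (1 - l - p 0) - c * p 1}

/-- The open triangle below the unit segment. -/
def EE (c s : ℝ) : Set Plane :=
  {p | p 1 < 0 ∧ 0 < 2 * s * c * p 0 + (s ^ 2 - c ^ 2) * p 1 ∧
    0 < 2 * s * c * (1 - p 0) + (s ^ 2 - c ^ 2) * p 1}

/-- The unit segment. -/
def SG : Set Plane := {p | p 1 = 0 ∧ 0 ≤ p 0 ∧ p 0 ≤ 1}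

def e0 : Plane := pt 0 0
def e1 : Plane := pt 1 0

theorem e0_mem_SG : e0 ∈ SG := by simp [SG, e0, pt_zero, pt_one]
theorem e1_mem_SG : e1 ∈ SG := by simp [SG, e1, pt_zero, pt_one]

section
variable {l c s : ℝ}

theorem TT_x0 (h : KP l c s) {p : Plane} (hp : p ∈ TT c s) : 0 ≤ p 0 := by
  obtain ⟨h0, h1, h2⟩ := hp
  have := h.s0; have := h.c0
  by_contra hn; push Not at hn
  nlinarith [mul_nonneg h.c0.le h0, mul_pos h.s0 (neg_pos.2 hn)]

theorem TT_x1 (h : KP l c s) {p : Plane} (hp : p ∈ TT c s) : p 0 ≤ 1 := by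
  obtain ⟨h0, h1, h2⟩ := hp
  by_contra hn; push Not at hn
  nlinarith [mul_nonneg h.c0.le h0, mul_pos h.s0 (sub_pos.2 hn)]

theorem s_le_one (h : KP l c s) : s ≤ 1 := by nlinarith [h.cs, h.s0, sq_nonneg c]

theorem s2_ge (h : KP l c s) : 3 * c ^ 2 ≤ s ^ 2 := by
  have := h.cs; have := h.c1; have := h.c0
  nlinarith

theorem e0_mem_TT (h : KP l c s) : e0 ∈ TT c s := by
  have := h.s0
  simp [TT, e0, pt_zero, pt_one, this.le]

theorem e1_mem_TT (h : KP l c s) : e1 ∈ TT c s := by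
  have := h.s0
  simp [TT, e1, pt_zero, pt_one, this.le]

theorem SG_sub_TT (h : KP l c s) : SG ⊆ TT c s := by
  rintro p ⟨h0, h1, h2⟩
  have := h.s0
  refine ⟨h0.ge, ?_, ?_⟩ <;> rw [h0] <;> nlinarith

theorem BB_sub_TT (h : KP l c s) : BB l c s ⊆ TT c s := by
  rintro p ⟨h0, h1, h2⟩
  have hs := h.s0; have hc := h.c0; have hlc := h.lc; have hl := h.lpos; have hc1 := h.c1
  have hsum : c * p 1 ≤ c * (l * s) := by
    have e : s * (1 - 2 * l) = 2 * (c * (l * s)) := by linear_combination (-s) * hlc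
    nlinarith
  have hy : p 1 ≤ l * s := le_of_mul_le_mul_left hsum hc
  have h3 : s * l = (s * l) * (2 * l * (1 + c)) := by rw [hlc]; ring
  refine ⟨h0, ?_, ?_⟩
  · nlinarith
  · nlinarith

theorem isClosed_TT : IsClosed (TT c s) := by
  simp only [TT, ofPred_and]
  refine IsClosed.inter (isClosed_le ?_ ?_) (IsClosed.inter (isClosed_le ?_ ?_)
    (isClosed_le ?_ ?_)) <;> fun_prop

theorem isClosed_BB : IsClosed (BB l c s) := by
  simp only [BB, ofPred_and]
  refine IsClosed.inter (isClosed_le ?_ ?_) (IsClosed.inter (isClosed_le ?_ ?_)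
    (isClosed_le ?_ ?_)) <;> fun_prop

theorem F_TT (h : KP l c s) (i : Fin 4) {p : Plane} (hp : p ∈ TT c s) :
    kochF l i p ∈ TT c s := by
  have hx0 := TT_x0 h hp
  have hx1 := TT_x1 h hp
  obtain ⟨h0, h1, h2⟩ := hp
  have hs := h.s0; have hc := h.c0; have hlc := h.lc; have hl := h.lpos; have hc1 := h.c1
  have hcs := h.cs
  have hl2 := h.l2
  have key : 0 ≤ (1 - 2 * c) * (1 + c) * p 1 := by
    have : 0 ≤ 1 - 2 * c := by linarith
    positivity
  have k1 := mul_le_mul_of_nonneg_left h1 hl.le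
  have k2 := mul_le_mul_of_nonneg_left h2 hl.le
  have ksx : 0 ≤ s * p 0 := by positivity
  have ksx' : 0 ≤ s * (1 - p 0) := mul_nonneg hs.le (by linarith)
  fin_cases i
  · show kochF l 0 p ∈ _
    refine ⟨?_, ?_, ?_⟩
    · rw [(h.F0 p).2]; positivity
    · rw [(h.F0 p).1, (h.F0 p).2]; nlinarith
    · rw [(h.F0 p).1, (h.F0 p).2]; nlinarith
  · show kochF l 1 p ∈ _
    refine ⟨?_, ?_, ?_⟩
    · rw [(h.F1 p).2]; positivity
    · rw [(h.F1 p).1, (h.F1 p).2]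
      have : s * (l * (c * p 0 - s * p 1) + l) - (1 + c) * (l * (s * p 0 + c * p 1))
        = l * (s * (1 - p 0) - (1 + c) * p 1) := by
          linear_combination (- l * p 1) * hcs
      nlinarith
    · rw [(h.F1 p).1, (h.F1 p).2]
      have : s * (1 - (l * (c * p 0 - s * p 1) + l)) - (1 + c) * (l * (s * p 0 + c * p 1))
        = l * ((1 + 2 * c) * (s * (1 - p 0)) + (1 - 2 * c) * (1 + c) * p 1) := by
          linear_combination (l * p 1) * hcs - s * hlc
      have : 0 ≤ l * ((1 + 2 * c) * (s * (1 - p 0)) + (1 - 2 * c) * (1 + c) * p 1) := by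
        apply mul_nonneg hl.le; nlinarith
      linarith
  · show kochF l 2 p ∈ _
    refine ⟨?_, ?_, ?_⟩
    · rw [(h.F2 p).2]; nlinarith [mul_nonneg hl.le ksx', mul_nonneg hl.le (mul_nonneg hc.le h0)]
    · rw [(h.F2 p).1, (h.F2 p).2]
      have : s * (l * (c * p 0 + s * p 1) + 1 / 2) - (1 + c) * (l * (- s * p 0 + c * p 1) + l * s)
        = l * ((1 + 2 * c) * (s * p 0) + (1 - 2 * c) * (1 + c) * p 1) := by
          linear_combination (l * p 1) * hcs - s / 2 * hlc
      have : 0 ≤ l * ((1 + 2 * c) * (s * p 0) + (1 - 2 * c) * (1 + c) * p 1) := by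
        apply mul_nonneg hl.le; nlinarith
      linarith
    · rw [(h.F2 p).1, (h.F2 p).2]
      have : s * (1 - (l * (c * p 0 + s * p 1) + 1 / 2)) -
          (1 + c) * (l * (- s * p 0 + c * p 1) + l * s)
        = l * (s * p 0 - (1 + c) * p 1) := by
          linear_combination (- l * p 1) * hcs - s / 2 * hlc
      nlinarith
  · show kochF l 3 p ∈ _
    refine ⟨?_, ?_, ?_⟩
    · rw [(h.F3 p).2]; positivity
    · rw [(h.F3 p).1, (h.F3 p).2]; nlinarith
    · rw [(h.F3 p).1, (h.F3 p).2]; nlinarith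

theorem eq_e0 (h : KP l c s) {q : Plane} (hq : q ∈ TT c s) (hx : q 0 ≤ 0) : q = e0 := by
  obtain ⟨h0, h1, h2⟩ := id hq
  have hx0 := TT_x0 h hq
  have hx' : q 0 = 0 := le_antisymm hx hx0
  have := h.c0
  rw [hx'] at h1
  have hy : q 1 = 0 := by nlinarith
  apply plane_ext <;> simp [e0, pt_zero, pt_one, hx', hy]

theorem eq_e1 (h : KP l c s) {q : Plane} (hq : q ∈ TT c s) (hx : 1 ≤ q 0) : q = e1 := by
  obtain ⟨h0, h1, h2⟩ := id hq
  have hx0 := TT_x1 h hq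
  have hx' : q 0 = 1 := le_antisymm hx0 hx
  have := h.c0
  rw [hx'] at h2
  have hy : q 1 = 0 := by nlinarith
  apply plane_ext <;> simp [e1, pt_zero, pt_one, hx', hy]

theorem pair01 (h : KP l c s) {q q' : Plane} (hq : q ∈ TT c s) (hq' : q' ∈ TT c s)
    (he : kochF l 0 q = kochF l 1 q') : q = e1 ∧ q' = e0 := by
  have hx0' := TT_x0 h hq'
  obtain ⟨h0, h1, h2⟩ := id hq
  obtain ⟨h0', h1', h2'⟩ := id hq'
  have hs := h.s0; have hc := h.c0; have hl := h.lpos; have hc1 := h.c1; have hcs := h.cs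
  have a := congrArg (fun z : Plane => z 0) he
  have b := congrArg (fun z : Plane => z 1) he
  simp only [(h.F0 _).1, (h.F1 _).1, (h.F0 _).2, (h.F1 _).2] at a b
  have a' : q 0 = c * q' 0 - s * q' 1 + 1 :=
    mul_left_cancel₀ hl.ne' (by linear_combination a)
  have b' : q 1 = s * q' 0 + c * q' 1 := mul_left_cancel₀ hl.ne' b
  rw [a', b'] at h2
  have h4 : 4 * (c * s) * q' 0 ≤ 0 := by
    have := mul_le_mul_of_nonneg_left h1' (show 0 ≤ 1 - 2 * c by linarith)
    have e : s * (1 - (c * q' 0 - s * q' 1 + 1)) = - (s * c * q' 0) + (1 - c ^ 2) * q' 1 := by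
      linear_combination q' 1 * hcs
    nlinarith
  have hx : q' 0 ≤ 0 := by
    by_contra hn; push Not at hn
    have : 0 < 4 * (c * s) * q' 0 := by positivity
    linarith
  have hq0 := eq_e0 h hq' hx
  refine ⟨eq_e1 h hq ?_, hq0⟩
  rw [a', hq0]; simp [e0, pt_zero, pt_one]

theorem pair23 (h : KP l c s) {q q' : Plane} (hq : q ∈ TT c s) (hq' : q' ∈ TT c s)
    (he : kochF l 2 q = kochF l 3 q') : q = e1 ∧ q' = e0 := by
  have hx1 := TT_x1 h hq
  obtain ⟨h0, h1, h2⟩ := id hq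
  obtain ⟨h0', h1', h2'⟩ := id hq'
  have hs := h.s0; have hc := h.c0; have hl := h.lpos; have hc1 := h.c1; have hcs := h.cs
  have hlc := h.lc
  have a := congrArg (fun z : Plane => z 0) he
  have b := congrArg (fun z : Plane => z 1) he
  simp only [(h.F2 _).1, (h.F3 _).1, (h.F2 _).2, (h.F3 _).2] at a b
  have a' : q' 0 = c * q 0 + s * q 1 - c :=
    mul_left_cancel₀ hl.ne' (by linear_combination (-1) * a + (1/2) * hlc)
  have b' : q' 1 = - s * q 0 + c * q 1 + s := mul_left_cancel₀ hl.ne' (by linear_combination - b)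
  rw [a', b'] at h1'
  have h4 : 4 * (c * s) * (1 - q 0) ≤ 0 := by
    have := mul_le_mul_of_nonneg_left h2 (show 0 ≤ 1 - 2 * c by linarith)
    have e : s * (c * q 0 + s * q 1 - c) = - (s * c * (1 - q 0)) + (1 - c ^ 2) * q 1 := by
      linear_combination q 1 * hcs
    nlinarith
  have hx : 1 ≤ q 0 := by
    by_contra hn; push Not at hn
    have : 0 < 4 * (c * s) * (1 - q 0) := by
      have : 0 < 1 - q 0 := by linarith
      positivity
    linarith
  have hq0 := eq_e1 h hq hx
  refine ⟨hq0, eq_e0 h hq' ?_⟩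
  rw [a', hq0]; simp [e1, pt_zero, pt_one]

theorem pair12 (h : KP l c s) {q q' : Plane} (hq : q ∈ TT c s) (hq' : q' ∈ TT c s)
    (he : kochF l 1 q = kochF l 2 q') : q = e1 ∧ q' = e0 := by
  have hx1 := TT_x1 h hq
  have hx0' := TT_x0 h hq'
  obtain ⟨h0, h1, h2⟩ := id hq
  obtain ⟨h0', h1', h2'⟩ := id hq'
  have hs := h.s0; have hc := h.c0; have hl := h.lpos; have hlc := h.lc
  have a := congrArg (fun z : Plane => z 0) he
  simp only [(h.F1 _).1, (h.F2 _).1] at a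
  have a' : c * (1 - q 0) + s * q 1 + c * q' 0 + s * q' 1 = 0 :=
    mul_left_cancel₀ hl.ne' (by linear_combination - a + (1/2) * hlc)
  have t1 : 0 ≤ c * (1 - q 0) := mul_nonneg hc.le (by linarith)
  have t2 : 0 ≤ s * q 1 := by positivity
  have t3 : 0 ≤ c * q' 0 := by positivity
  have t4 : 0 ≤ s * q' 1 := by positivity
  refine ⟨eq_e1 h hq ?_, eq_e0 h hq' ?_⟩
  · have : c * (1 - q 0) ≤ 0 := by linarith
    nlinarith
  · have : c * q' 0 ≤ 0 := by linarith
    nlinarith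

theorem pair02 (h : KP l c s) {q q' : Plane} (hq : q ∈ TT c s) (hq' : q' ∈ TT c s)
    (he : kochF l 0 q = kochF l 2 q') : False := by
  have hx1 := TT_x1 h hq
  have hx0' := TT_x0 h hq'
  have h0' := hq'.1
  have hs := h.s0; have hc := h.c0; have hl := h.lpos; have hl2 := h.l2
  have a := congrArg (fun z : Plane => z 0) he
  simp only [(h.F0 _).1, (h.F2 _).1] at a
  have : 0 ≤ l * (c * q' 0 + s * q' 1) := by positivity
  nlinarith

theorem pair03 (h : KP l c s) {q q' : Plane} (hq : q ∈ TT c s) (hq' : q' ∈ TT c s)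
    (he : kochF l 0 q = kochF l 3 q') : False := by
  have hx1 := TT_x1 h hq
  have hx0' := TT_x0 h hq'
  have hl := h.lpos; have hl2 := h.l2
  have a := congrArg (fun z : Plane => z 0) he
  simp only [(h.F0 _).1, (h.F3 _).1] at a
  nlinarith

theorem pair13 (h : KP l c s) {q q' : Plane} (hq : q ∈ TT c s) (hq' : q' ∈ TT c s)
    (he : kochF l 1 q = kochF l 3 q') : False := by
  have hx1 := TT_x1 h hq
  have hx0' := TT_x0 h hq'
  have h0 := hq.1
  have hs := h.s0; have hc := h.c0; have hl := h.lpos; have hl2 := h.l2; have hlc := h.lc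
  have a := congrArg (fun z : Plane => z 0) he
  simp only [(h.F1 _).1, (h.F3 _).1] at a
  have t : 0 ≤ l * (c * (1 - q 0) + s * q 1) := by
    have : 0 ≤ 1 - q 0 := by linarith
    positivity
  nlinarith

/-- Distinct pieces of the triangle meet only in end points. -/
theorem pairF (h : KP l c s) {i j : Fin 4} (hij : i ≠ j) {q q' : Plane} (hq : q ∈ TT c s)
    (hq' : q' ∈ TT c s) (he : kochF l i q = kochF l j q') : q = e0 ∨ q = e1 := by
  fin_cases i <;> fin_cases j
  · exact absurd rfl hij
  · exact Or.inr (pair01 h hq hq' he).1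
  · exact (pair02 h hq hq' he).elim
  · exact (pair03 h hq hq' he).elim
  · exact Or.inl (pair01 h hq' hq he.symm).2
  · exact absurd rfl hij
  · exact Or.inr (pair12 h hq hq' he).1
  · exact (pair13 h hq hq' he).elim
  · exact (pair02 h hq' hq he.symm).elim
  · exact Or.inl (pair12 h hq' hq he.symm).2
  · exact absurd rfl hij
  · exact Or.inr (pair23 h hq hq' he).1
  · exact (pair03 h hq' hq he.symm).elim
  · exact (pair13 h hq' hq he.symm).elim
  · exact Or.inl (pair23 h hq' hq he.symm).2
  · exact absurd rfl hij

theorem leg1 (h : KP l c s) (q : Plane) :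
    s * (kochF l 1 q 0 - l) - c * kochF l 1 q 1 = - (l * q 1) := by
  rw [(h.F1 _).1, (h.F1 _).2]; linear_combination (- l * q 1) * h.cs

theorem leg2 (h : KP l c s) (q : Plane) :
    s * (1 - l - kochF l 2 q 0) - c * kochF l 2 q 1 = - (l * q 1) := by
  rw [(h.F2 _).1, (h.F2 _).2]; linear_combination (- l * q 1) * h.cs - s / 2 * h.lc

theorem BB_F (h : KP l c s) {i : Fin 4} {q : Plane} (hq : q ∈ TT c s)
    (hB : kochF l i q ∈ BB l c s) : q ∈ SG := by
  have hx0 := TT_x0 h hq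
  have hx1 := TT_x1 h hq
  have hs := h.s0; have hc := h.c0; have hl := h.lpos
  have h0 := hq.1
  obtain ⟨b0, b1, b2⟩ := hB
  fin_cases i
  · change 0 ≤ s * (kochF l 0 q 0 - l) - c * kochF l 0 q 1 at b1
    rw [(h.F0 _).1, (h.F0 _).2] at b1
    have : 0 ≤ c * (l * q 1) := by positivity
    have : 1 ≤ q 0 := by
      by_contra hn; push Not at hn
      have : 0 < (s * l) * (1 - q 0) := mul_pos (mul_pos hs hl) (by linarith)
      nlinarith
    rw [eq_e1 h hq this]; exact e1_mem_SG
  · change 0 ≤ s * (kochF l 1 q 0 - l) - c * kochF l 1 q 1 at b1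
    rw [leg1 h] at b1
    exact ⟨by nlinarith, hx0, hx1⟩
  · change 0 ≤ s * (1 - l - kochF l 2 q 0) - c * kochF l 2 q 1 at b2
    rw [leg2 h] at b2
    exact ⟨by nlinarith, hx0, hx1⟩
  · change 0 ≤ s * (1 - l - kochF l 3 q 0) - c * kochF l 3 q 1 at b2
    rw [(h.F3 _).1, (h.F3 _).2] at b2
    have : 0 ≤ c * (l * q 1) := by positivity
    have : q 0 ≤ 0 := by
      by_contra hn; push Not at hn
      have : 0 < (s * l) * q 0 := mul_pos (mul_pos hs hl) hn
      nlinarith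
    rw [eq_e0 h hq this]; exact e0_mem_SG

theorem BP_F (h : KP l c s) {i : Fin 4} {q : Plane} (hq : q ∈ TT c s) :
    kochF l i q ∉ BP l c s := by
  rintro ⟨b0, b1, b2⟩
  have hS := BB_F h hq (i := i) ⟨b0, b1.le, b2.le⟩
  obtain ⟨q1, q0, q2⟩ := hS
  have hs := h.s0; have hl := h.lpos
  fin_cases i
  · change 0 < s * (kochF l 0 q 0 - l) - c * kochF l 0 q 1 at b1
    rw [(h.F0 _).1, (h.F0 _).2, q1] at b1
    have : 0 ≤ (s * l) * (1 - q 0) := mul_nonneg (by positivity) (by linarith)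
    nlinarith
  · change 0 < s * (kochF l 1 q 0 - l) - c * kochF l 1 q 1 at b1
    rw [leg1 h, q1] at b1; linarith
  · change 0 < s * (1 - l - kochF l 2 q 0) - c * kochF l 2 q 1 at b2
    rw [leg2 h, q1] at b2; linarith
  · change 0 < s * (1 - l - kochF l 3 q 0) - c * kochF l 3 q 1 at b2
    rw [(h.F3 _).1, (h.F3 _).2, q1] at b2
    have : 0 ≤ (s * l) * q 0 := by positivity
    nlinarith

theorem SG_cover (h : KP l c s) {p : Plane} (hp : p ∈ SG) :
    p ∈ BB l c s ∨ (∃ q ∈ SG, kochF l 0 q = p) ∨ ∃ q ∈ SG, kochF l 3 q = p := by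
  obtain ⟨h1, h0, h2⟩ := hp
  have hs := h.s0; have hl := h.lpos
  rcases le_total (p 0) l with hx | hx
  · right; left
    refine ⟨pt (p 0 / l) 0, ⟨pt_one _ _, ?_, ?_⟩, plane_ext ?_ ?_⟩
    · rw [pt_zero]; positivity
    · rw [pt_zero, div_le_one hl]; exact hx
    · rw [(h.F0 _).1, pt_zero]; field_simp
    · rw [(h.F0 _).2, pt_one, h1]; ring
  rcases le_total (p 0) (1 - l) with hx' | hx'
  · left
    refine ⟨h1.ge, ?_, ?_⟩ <;> rw [h1] <;> nlinarith
  · right; right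
    refine ⟨pt ((p 0 - (1 - l)) / l) 0, ⟨pt_one _ _, ?_, ?_⟩, plane_ext ?_ ?_⟩
    · rw [pt_zero]; apply div_nonneg <;> linarith
    · rw [pt_zero, div_le_one hl]; linarith
    · rw [(h.F3 _).1, pt_zero]; field_simp; ring
    · rw [(h.F3 _).2, pt_one, h1]; ring

/-- The finite stage approximations from outside of the filled region. -/
def CC (l c s : ℝ) : ℕ → Set Plane
  | 0 => TT c s
  | n + 1 => BB l c s ∪ ⋃ i, kochF l i '' CC l c s n

/-- The finite stage approximations from inside. -/
def DD (l c s : ℝ) : ℕ → Set Plane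
  | 0 => ∅
  | n + 1 => BB l c s ∪ ⋃ i, kochF l i '' DD l c s n

theorem SG_sub_CC (h : KP l c s) (n : ℕ) : SG ⊆ CC l c s n := by
  induction n with
  | zero => exact SG_sub_TT h
  | succ n ih =>
    intro p hp
    rcases SG_cover h hp with hB | ⟨q, hq, rfl⟩ | ⟨q, hq, rfl⟩
    · exact Or.inl hB
    · exact Or.inr (mem_iUnion.2 ⟨0, q, ih hq, rfl⟩)
    · exact Or.inr (mem_iUnion.2 ⟨3, q, ih hq, rfl⟩)

theorem CC_sub_TT (h : KP l c s) (n : ℕ) : CC l c s n ⊆ TT c s := by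
  induction n with
  | zero => exact subset_rfl
  | succ n ih =>
    rintro p (hB | hF)
    · exact BB_sub_TT h hB
    · obtain ⟨i, q, hq, rfl⟩ := mem_iUnion.1 hF
      exact F_TT h i (ih hq)

theorem isClosed_CC (h : KP l c s) (n : ℕ) : IsClosed (CC l c s n) := by
  induction n with
  | zero => exact isClosed_TT
  | succ n ih =>
    exact isClosed_BB.union (isClosed_iUnion_of_finite fun i => (h.sim i).isClosed_image ih)

theorem CC_inter (h : KP l c s) (n : ℕ) (i : Fin 4) :
    CC l c s (n + 1) ∩ kochF l i '' TT c s ⊆ kochF l i '' CC l c s n := by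
  rintro _ ⟨hp, q, hq, rfl⟩
  refine ⟨q, ?_, rfl⟩
  rcases hp with hB | hF
  · exact SG_sub_CC h n (BB_F h hq hB)
  · obtain ⟨j, q', hq', he⟩ := mem_iUnion.1 hF
    by_cases hij : i = j
    · subst hij
      rwa [← (h.sim i).injective he]
    · rcases pairF h hij hq (CC_sub_TT h n hq') he.symm with rfl | rfl
      · exact SG_sub_CC h n e0_mem_SG
      · exact SG_sub_CC h n e1_mem_SG

theorem CC_left (h : KP l c s) (n : ℕ) {p : Plane} (hp : p ∈ CC l c s (n + 1))
    (hx : p 0 ≤ 1 / 2) :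
    p ∈ BB l c s ∪ kochF l 0 '' TT c s ∪ kochF l 1 '' TT c s := by
  have hs := h.s0; have hc := h.c0; have hl := h.lpos; have hl2 := h.l2; have hlc := h.lc
  rcases hp with hB | hF
  · exact Or.inl (Or.inl hB)
  obtain ⟨i, q, hq, rfl⟩ := mem_iUnion.1 hF
  have hq := CC_sub_TT h n hq
  have x0 := TT_x0 h hq
  have y0 := hq.1
  fin_cases i
  · exact Or.inl (Or.inr ⟨q, hq, rfl⟩)
  · exact Or.inr ⟨q, hq, rfl⟩
  · change kochF l 2 q 0 ≤ _ at hx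
    rw [(h.F2 q).1] at hx
    have h1 : 0 ≤ l * (c * q 0) := by positivity
    have h2 : 0 ≤ l * (s * q 1) := by positivity
    have h3 : (l * c) * q 0 ≤ 0 := by nlinarith
    have h4 : q 0 ≤ 0 := by
      by_contra hn; push Not at hn
      have : 0 < (l * c) * q 0 := by positivity
      linarith
    rw [eq_e0 h hq h4]
    refine Or.inl (Or.inl ⟨?_, ?_, ?_⟩)
    · change 0 ≤ kochF l 2 e0 1
      rw [(h.F2 _).2]; simp [e0, pt_zero, pt_one]; positivity
    · change 0 ≤ s * (kochF l 2 e0 0 - l) - c * kochF l 2 e0 1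
      rw [(h.F2 _).2, (h.F2 _).1]; simp [e0, pt_zero, pt_one]; nlinarith
    · change 0 ≤ s * (1 - l - kochF l 2 e0 0) - c * kochF l 2 e0 1
      rw [(h.F2 _).2, (h.F2 _).1]; simp [e0, pt_zero, pt_one]; nlinarith
  · change kochF l 3 q 0 ≤ _ at hx
    rw [(h.F3 q).1] at hx
    nlinarith

theorem CC_right (h : KP l c s) (n : ℕ) {p : Plane} (hp : p ∈ CC l c s (n + 1))
    (hx : 1 / 2 ≤ p 0) :
    p ∈ BB l c s ∪ kochF l 2 '' TT c s ∪ kochF l 3 '' TT c s := by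
  have hs := h.s0; have hc := h.c0; have hl := h.lpos; have hl2 := h.l2; have hlc := h.lc
  rcases hp with hB | hF
  · exact Or.inl (Or.inl hB)
  obtain ⟨i, q, hq, rfl⟩ := mem_iUnion.1 hF
  have hq := CC_sub_TT h n hq
  have x1 := TT_x1 h hq
  have y0 := hq.1
  fin_cases i
  · change _ ≤ kochF l 0 q 0 at hx
    rw [(h.F0 q).1] at hx
    nlinarith
  · change _ ≤ kochF l 1 q 0 at hx
    rw [(h.F1 q).1] at hx
    have h2 : 0 ≤ l * (s * q 1) := by positivity
    have h3 : (l * c) * (1 - q 0) ≤ 0 := by nlinarith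
    have h4 : 1 ≤ q 0 := by
      by_contra hn; push Not at hn
      have : 0 < (l * c) * (1 - q 0) := mul_pos (by positivity) (by linarith)
      linarith
    rw [eq_e1 h hq h4]
    refine Or.inl (Or.inl ⟨?_, ?_, ?_⟩)
    · change 0 ≤ kochF l 1 e1 1
      rw [(h.F1 _).2]; simp [e1, pt_zero, pt_one]; positivity
    · change 0 ≤ s * (kochF l 1 e1 0 - l) - c * kochF l 1 e1 1
      rw [(h.F1 _).2, (h.F1 _).1]; simp [e1, pt_zero, pt_one]; nlinarith
    · change 0 ≤ s * (1 - l - kochF l 1 e1 0) - c * kochF l 1 e1 1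
      rw [(h.F1 _).2, (h.F1 _).1]; simp [e1, pt_zero, pt_one]; nlinarith
  · exact Or.inl (Or.inr ⟨q, hq, rfl⟩)
  · exact Or.inr ⟨q, hq, rfl⟩

theorem TT_mid (h : KP l c s) {p : Plane} (hp : p ∈ TT c s) (hx : p 0 = 1 / 2) :
    p ∈ BB l c s := by
  obtain ⟨h0, h1, h2⟩ := hp
  have hs := h.s0; have hc := h.c0; have hl := h.lpos; have hlc := h.lc
  rw [hx] at h1
  have hy : p 1 ≤ l * s := by
    have := mul_le_mul_of_nonneg_left h1 hl.le
    nlinarith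
  have := mul_le_mul_of_nonneg_left hy hc.le
  have e : s * (1 / 2 - l) = c * (l * s) := by linear_combination (-s / 2) * hlc
  refine ⟨h0, ?_, ?_⟩ <;> rw [hx] <;> linarith

end


/-! ### Fullness of the approximating sets -/

/-- `A` is full if it leaves no bounded hole. -/
def Full (A : Set Plane) : Prop :=
  ∀ V : Set Plane, IsOpen V → IsPreconnected V → Bornology.IsBounded V → frontier V ⊆ A →
    Disjoint V A → V = ∅

def StarAt (m : Plane) (A : Set Plane) : Prop :=
  ∀ p ∈ A, ∀ u : ℝ, 0 ≤ u → u ≤ 1 → m + u • (p - m) ∈ A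

theorem StarAt.union {m : Plane} {A A' : Set Plane} (h : StarAt m A) (h' : StarAt m A') :
    StarAt m (A ∪ A') := by
  rintro p (hp | hp) u hu hu'
  · exact Or.inl (h p hp u hu hu')
  · exact Or.inr (h' p hp u hu hu')

theorem StarAt.image {m : Plane} {A : Set Plane} (h : StarAt m A) {S : Plane → Plane} {r : ℝ}
    (hS : IsSim S r) : StarAt (S m) (S '' A) := by
  rintro _ ⟨p, hp, rfl⟩ u hu hu'
  exact ⟨_, h p hp u hu hu', hS.affine m p u⟩

/-- A bounded open set whose frontier lies in a star-shaped set lies in that set. -/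
theorem subset_of_star {V A : Set Plane} {m : Plane} (hV : IsOpen V)
    (hb : Bornology.IsBounded V) (hf : frontier V ⊆ A) (hm : m ∈ A) (hA : StarAt m A) : V ⊆ A := by
  intro x hx
  by_contra hxA
  have hxm : x ≠ m := fun h => hxA (h ▸ hm)
  have hd : 0 < dist x m := dist_pos.2 hxm
  let f : ℝ → Plane := fun τ => m + τ • (x - m)
  have hfc : Continuous f := by fun_prop
  have hR : IsPreconnected (f '' Ici (1 : ℝ)) := isPreconnected_Ici.image _ hfc.continuousOn
  have hnot : ∀ τ ∈ Ici (1 : ℝ), f τ ∉ A := by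
    intro τ hτ hA'
    have hτ' : (1 : ℝ) ≤ τ := hτ
    have h0 : 0 < τ := by linarith
    have := hA _ hA' τ⁻¹ (by positivity) (inv_le_one_of_one_le₀ hτ')
    apply hxA
    convert this using 1
    simp [f, smul_smul, inv_mul_cancel₀ h0.ne']
  have hsub : f '' Ici (1 : ℝ) ⊆ V := by
    apply hR.subset_of_closure_inter_subset hV
    · exact ⟨x, ⟨1, by simp, by simp [f]⟩, hx⟩
    · rintro z ⟨hz, τ, hτ, rfl⟩
      by_contra hzV
      apply hnot τ hτ
      apply hf
      rw [hV.frontier_eq]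
      exact ⟨hz, hzV⟩
  obtain ⟨C, hC⟩ := hb.subset_closedBall m
  have h1 := hC (hsub ⟨max 1 (C / dist x m + 1), mem_Ici.2 (le_max_left _ _), rfl⟩)
  rw [mem_closedBall] at h1
  have h2 : dist (f (max 1 (C / dist x m + 1))) m = max 1 (C / dist x m + 1) * dist x m := by
    simp only [f, dist_eq_norm, add_sub_cancel_left, norm_smul, Real.norm_eq_abs]
    rw [abs_of_nonneg (by positivity)]
  rw [h2] at h1
  have h3 : (C / dist x m + 1) * dist x m ≤ C :=
    (mul_le_mul_of_nonneg_right (le_max_right _ _) hd.le).trans h1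
  rw [add_mul, div_mul_cancel₀ _ hd.ne'] at h3
  linarith

theorem subset_or_of_closed {V A A' : Set Plane} (hV : IsPreconnected V) (hA : IsClosed A)
    (hA' : IsClosed A') (h : V ⊆ A ∪ A') (hd : ∀ x ∈ V, x ∈ A → x ∈ A' → False) :
    V ⊆ A ∨ V ⊆ A' := by
  apply isPreconnected_iff_subset_of_disjoint_closed.1 hV A A' hA hA' h
  ext x; simp only [mem_inter_iff, mem_empty_iff_false, iff_false]
  rintro ⟨h1, h2, h3⟩; exact hd x h1 h2 h3

theorem Full.pull {A V : Set Plane} {S : Plane → Plane} {r : ℝ} (hS : IsSim S r) (hA : Full A)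
    {T : Set Plane} (hT : Bornology.IsBounded T) (hTc : IsClosed T)
    (hV : IsOpen V) (hVc : IsPreconnected V) (hVT : V ⊆ S '' T) {X : Set Plane}
    (hf : frontier V ⊆ X) (hX : X ∩ S '' T ⊆ S '' A) (hAX : S '' A ⊆ X) (hd : Disjoint V X) :
    V = ∅ := by
  have hcl := hS.isClosed_image hTc
  have hf' : frontier V ⊆ S '' A := fun z hz =>
    hX ⟨hf hz, closure_minimal hVT hcl (frontier_subset_closure hz)⟩
  obtain ⟨e, rfl⟩ := hS.exists_homeo
  have := hA (e ⁻¹' V) (hV.preimage e.continuous) ((e.isPreconnected_preimage).2 hVc)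
    (hT.subset ?_) ?_ ?_
  · rwa [preimage_eq_empty_iff, e.surjective.range_eq, disjoint_univ] at this
  · intro p hp
    obtain ⟨q, hq, he⟩ := hVT hp
    rwa [← e.injective he]
  · rw [← e.preimage_frontier]
    intro p hp
    obtain ⟨q, hq, he⟩ := hf' hp
    rwa [← e.injective he]
  · rw [Set.disjoint_left] at hd ⊢
    intro p hp hpA
    exact hd hp (hAX ⟨p, hpA, rfl⟩)

section
variable {l c s : ℝ}

theorem star_TT {m : Plane} (hm : m ∈ TT c s) : StarAt m (TT c s) := by
  rintro p ⟨p0, p1, p2⟩ u hu hu'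
  obtain ⟨m0, m1, m2⟩ := hm
  have hu1 : 0 ≤ 1 - u := by linarith
  refine ⟨?_, ?_, ?_⟩ <;>
    simp only [PiLp.add_apply, PiLp.smul_apply, PiLp.sub_apply, smul_eq_mul]
  · nlinarith [mul_nonneg hu p0, mul_nonneg hu1 m0]
  · nlinarith [mul_le_mul_of_nonneg_left p1 hu, mul_le_mul_of_nonneg_left m1 hu1]
  · nlinarith [mul_le_mul_of_nonneg_left p2 hu, mul_le_mul_of_nonneg_left m2 hu1]

theorem star_BB {m : Plane} (hm : m ∈ BB l c s) : StarAt m (BB l c s) := by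
  rintro p ⟨p0, p1, p2⟩ u hu hu'
  obtain ⟨m0, m1, m2⟩ := hm
  have hu1 : 0 ≤ 1 - u := by linarith
  refine ⟨?_, ?_, ?_⟩ <;>
    simp only [PiLp.add_apply, PiLp.smul_apply, PiLp.sub_apply, smul_eq_mul]
  · nlinarith [mul_nonneg hu p0, mul_nonneg hu1 m0]
  · nlinarith [mul_nonneg hu p1, mul_nonneg hu1 m1]
  · nlinarith [mul_nonneg hu p2, mul_nonneg hu1 m2]

theorem dist_TT (h : KP l c s) {p q : Plane} (hp : p ∈ TT c s) (hq : q ∈ TT c s) :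
    dist p q ≤ 2 := by
  have a := TT_x0 h hp
  have b := TT_x1 h hp
  have a' := TT_x0 h hq
  have b' := TT_x1 h hq
  have hs := s_le_one h
  have hs0 := h.s0
  have hc := h.c0
  have y : p 1 ≤ 1 := by nlinarith [hp.1, hp.2.1]
  have y' : q 1 ≤ 1 := by nlinarith [hq.1, hq.2.1]
  have y0 := hp.1
  have y0' := hq.1
  apply dist_le_of (by norm_num)
  have : (p 0 - q 0) ^ 2 ≤ 1 := by rw [sq_le_one_iff_abs_le_one, abs_le]; constructor <;> linarith
  have : (p 1 - q 1) ^ 2 ≤ 1 := by rw [sq_le_one_iff_abs_le_one, abs_le]; constructor <;> linarith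
  linarith

theorem bounded_TT (h : KP l c s) : Bornology.IsBounded (TT c s) :=
  Metric.isBounded_iff.2 ⟨2, fun _ hp _ hq => dist_TT h hp hq⟩

theorem F0_e1 (h : KP l c s) : kochF l 0 e1 = pt l 0 := by
  apply plane_ext
  · rw [(h.F0 _).1]; simp [e1, pt_zero]
  · rw [(h.F0 _).2]; simp [e1, pt_one]

theorem F1_e0 (h : KP l c s) : kochF l 1 e0 = pt l 0 := by
  apply plane_ext
  · rw [(h.F1 _).1]; simp [e0, pt_zero, pt_one]
  · rw [(h.F1 _).2]; simp [e0, pt_one, pt_zero]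

theorem F2_e1 (h : KP l c s) : kochF l 2 e1 = pt (1 - l) 0 := by
  have := h.lc
  apply plane_ext
  · rw [(h.F2 _).1]; simp [e1, pt_zero, pt_one]; linarith
  · rw [(h.F2 _).2]; simp [e1, pt_zero, pt_one]

theorem F3_e0 (h : KP l c s) : kochF l 3 e0 = pt (1 - l) 0 := by
  apply plane_ext
  · rw [(h.F3 _).1]; simp [e0, pt_zero]
  · rw [(h.F3 _).2]; simp [e0, pt_one]

theorem ml_mem_BB (h : KP l c s) : pt l 0 ∈ BB l c s := by
  have := h.s0; have := h.l2
  refine ⟨?_, ?_, ?_⟩ <;> simp only [pt_zero, pt_one] <;> nlinarith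

theorem mr_mem_BB (h : KP l c s) : pt (1 - l) 0 ∈ BB l c s := by
  have := h.s0; have := h.l2
  refine ⟨?_, ?_, ?_⟩ <;> simp only [pt_zero, pt_one] <;> nlinarith

theorem full_CC (h : KP l c s) (n : ℕ) : Full (CC l c s n) := by
  induction n with
  | zero =>
    intro V hV hVc hb hf hd
    have := subset_of_star hV hb hf (e0_mem_TT h) (star_TT (e0_mem_TT h))
    exact Set.subset_empty_iff.1 (fun x hx => (Set.disjoint_left.1 hd hx (this hx)).elim)
  | succ n ih =>
    intro V hV hVc hb hf hd
    have hd' := Set.disjoint_left.1 hd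
    have hVT : V ⊆ TT c s := subset_of_star hV hb (hf.trans (CC_sub_TT h _)) (e0_mem_TT h)
      (star_TT (e0_mem_TT h))
    have hfin : ∀ i, V ⊆ kochF l i '' TT c s → V = ∅ := fun i hi =>
      ih.pull (h.sim i) (bounded_TT h) isClosed_TT hV hVc hi hf (CC_inter h n i)
        (fun z hz => Or.inr (mem_iUnion.2 ⟨i, hz⟩)) hd
    have hcl : ∀ i, IsClosed (kochF l i '' TT c s) := fun i => (h.sim i).isClosed_image isClosed_TT
    have hL : IsClosed {p : Plane | p 0 ≤ 1 / 2} := isClosed_le (by fun_prop) (by fun_prop)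
    have hR : IsClosed {p : Plane | 1 / 2 ≤ p 0} := isClosed_le (by fun_prop) (by fun_prop)
    rcases subset_or_of_closed hVc hL hR (fun x _ => by
      rcases le_total (x 0) (1 / 2) with h1 | h1
      · exact Or.inl h1
      · exact Or.inr h1)
      (fun x hx h1 h2 => hd' hx (Or.inl (TT_mid h (hVT hx) (le_antisymm h1 h2)))) with hs | hs
    · have hf' : frontier V ⊆ BB l c s ∪ kochF l 0 '' TT c s ∪ kochF l 1 '' TT c s :=
        fun z hz => CC_left h n (hf hz) (closure_minimal hs hL (frontier_subset_closure hz))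
      have hst : StarAt (pt l 0) (BB l c s ∪ kochF l 0 '' TT c s ∪ kochF l 1 '' TT c s) := by
        refine ((star_BB (ml_mem_BB h)).union ?_).union ?_
        · rw [← F0_e1 h]; exact (star_TT (e1_mem_TT h)).image (h.sim 0)
        · rw [← F1_e0 h]; exact (star_TT (e0_mem_TT h)).image (h.sim 1)
      have hV' := subset_of_star hV hb hf' (Or.inl (Or.inl (ml_mem_BB h))) hst
      rcases subset_or_of_closed hVc (hcl 0) (hcl 1) (fun x hx => by
          rcases hV' hx with (hB | h0) | h1
          · exact (hd' hx (Or.inl hB)).elim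
          · exact Or.inl h0
          · exact Or.inr h1) (fun x hx h1 h2 => by
          obtain ⟨q, hq, rfl⟩ := h1
          obtain ⟨q', hq', he⟩ := h2
          rw [(pair01 h hq hq' he.symm).1, F0_e1 h] at hx
          exact hd' hx (Or.inl (ml_mem_BB h))) with h1 | h1
      · exact hfin 0 h1
      · exact hfin 1 h1
    · have hf' : frontier V ⊆ BB l c s ∪ kochF l 2 '' TT c s ∪ kochF l 3 '' TT c s :=
        fun z hz => CC_right h n (hf hz) (closure_minimal hs hR (frontier_subset_closure hz))
      have hst : StarAt (pt (1 - l) 0) (BB l c s ∪ kochF l 2 '' TT c s ∪ kochF l 3 '' TT c s) := by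
        refine ((star_BB (mr_mem_BB h)).union ?_).union ?_
        · rw [← F2_e1 h]; exact (star_TT (e1_mem_TT h)).image (h.sim 2)
        · rw [← F3_e0 h]; exact (star_TT (e0_mem_TT h)).image (h.sim 3)
      have hV' := subset_of_star hV hb hf' (Or.inl (Or.inl (mr_mem_BB h))) hst
      rcases subset_or_of_closed hVc (hcl 2) (hcl 3) (fun x hx => by
          rcases hV' hx with (hB | h0) | h1
          · exact (hd' hx (Or.inl hB)).elim
          · exact Or.inl h0
          · exact Or.inr h1) (fun x hx h1 h2 => by
          obtain ⟨q, hq, rfl⟩ := h1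
          obtain ⟨q', hq', he⟩ := h2
          rw [(pair23 h hq hq' he.symm).1, F2_e1 h] at hx
          exact hd' hx (Or.inl (mr_mem_BB h))) with h1 | h1
      · exact hfin 2 h1
      · exact hfin 3 h1

end

/-! ### The central triangle -/

/-- The central triangle. -/
def TR : Set Plane := {p | p 1 ≤ 0 ∧ 0 ≤ Real.sqrt 3 * p 0 + p 1 ∧
  0 ≤ Real.sqrt 3 * (1 - p 0) + p 1}

/-- The open central triangle. -/
def TRo : Set Plane := {p | p 1 < 0 ∧ 0 < Real.sqrt 3 * p 0 + p 1 ∧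
  0 < Real.sqrt 3 * (1 - p 0) + p 1}

/-- The center. -/
def gg : Plane := pt (1 / 2) (- (Real.sqrt 3 / 6))

/-- The kite spanned by the center and the Koch triangle. -/
def KT (c s : ℝ) : Set Plane := {p | (1 + c) * p 1 ≤ s * p 0 ∧ (1 + c) * p 1 ≤ s * (1 - p 0) ∧
  0 ≤ p 0 + Real.sqrt 3 * p 1 ∧ 0 ≤ 1 - p 0 + Real.sqrt 3 * p 1}

theorem G_TR (i : Fin 3) {p : Plane} : kochG i p ∈ TR ↔ p ∈ TR := by
  have h3 := sqrt3_sq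
  have h0 := sqrt3_pos
  fin_cases i
  · exact Iff.rfl
  · have e1 : Real.sqrt 3 * kochG 1 p 0 + kochG 1 p 1 = Real.sqrt 3 * (1 - p 0) + p 1 := by
      rw [(G1 p).1, (G1 p).2]; linear_combination p 1 / 2 * h3
    have e2 : Real.sqrt 3 * (1 - kochG 1 p 0) + kochG 1 p 1 = - 2 * p 1 := by
      rw [(G1 p).1, (G1 p).2]; linear_combination - p 1 / 2 * h3
    have e3 : kochG 1 p 1 = - (Real.sqrt 3 * p 0 + p 1) / 2 := by
      rw [(G1 p).2]; ring
    show (_ ∧ _ ∧ _) ↔ (_ ∧ _ ∧ _)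
    change kochG 1 p 1 ≤ 0 ∧ 0 ≤ Real.sqrt 3 * kochG 1 p 0 + kochG 1 p 1 ∧
      0 ≤ Real.sqrt 3 * (1 - kochG 1 p 0) + kochG 1 p 1 ↔ _
    rw [e1, e2, e3]
    constructor
    · rintro ⟨a, b, d⟩; exact ⟨by linarith, by linarith, by linarith⟩
    · rintro ⟨a, b, d⟩; exact ⟨by linarith, by linarith, by linarith⟩
  · have e1 : Real.sqrt 3 * kochG 2 p 0 + kochG 2 p 1 = - 2 * p 1 := by
      rw [(G2 p).1, (G2 p).2]; linear_combination - p 1 / 2 * h3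
    have e2 : Real.sqrt 3 * (1 - kochG 2 p 0) + kochG 2 p 1 = Real.sqrt 3 * p 0 + p 1 := by
      rw [(G2 p).1, (G2 p).2]; linear_combination p 1 / 2 * h3
    have e3 : kochG 2 p 1 = - (Real.sqrt 3 * (1 - p 0) + p 1) / 2 := by
      rw [(G2 p).2]; ring
    change kochG 2 p 1 ≤ 0 ∧ 0 ≤ Real.sqrt 3 * kochG 2 p 0 + kochG 2 p 1 ∧
      0 ≤ Real.sqrt 3 * (1 - kochG 2 p 0) + kochG 2 p 1 ↔ _
    rw [e1, e2, e3]
    constructor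
    · rintro ⟨a, b, d⟩; exact ⟨by linarith, by linarith, by linarith⟩
    · rintro ⟨a, b, d⟩; exact ⟨by linarith, by linarith, by linarith⟩

theorem G_TRo (i : Fin 3) {p : Plane} : kochG i p ∈ TRo ↔ p ∈ TRo := by
  have h3 := sqrt3_sq
  have h0 := sqrt3_pos
  fin_cases i
  · exact Iff.rfl
  · have e1 : Real.sqrt 3 * kochG 1 p 0 + kochG 1 p 1 = Real.sqrt 3 * (1 - p 0) + p 1 := by
      rw [(G1 p).1, (G1 p).2]; linear_combination p 1 / 2 * h3
    have e2 : Real.sqrt 3 * (1 - kochG 1 p 0) + kochG 1 p 1 = - 2 * p 1 := by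
      rw [(G1 p).1, (G1 p).2]; linear_combination - p 1 / 2 * h3
    have e3 : kochG 1 p 1 = - (Real.sqrt 3 * p 0 + p 1) / 2 := by
      rw [(G1 p).2]; ring
    change kochG 1 p 1 < 0 ∧ 0 < Real.sqrt 3 * kochG 1 p 0 + kochG 1 p 1 ∧
      0 < Real.sqrt 3 * (1 - kochG 1 p 0) + kochG 1 p 1 ↔ _
    rw [e1, e2, e3]
    constructor
    · rintro ⟨a, b, d⟩; exact ⟨by linarith, by linarith, by linarith⟩
    · rintro ⟨a, b, d⟩; exact ⟨by linarith, by linarith, by linarith⟩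
  · have e1 : Real.sqrt 3 * kochG 2 p 0 + kochG 2 p 1 = - 2 * p 1 := by
      rw [(G2 p).1, (G2 p).2]; linear_combination - p 1 / 2 * h3
    have e2 : Real.sqrt 3 * (1 - kochG 2 p 0) + kochG 2 p 1 = Real.sqrt 3 * p 0 + p 1 := by
      rw [(G2 p).1, (G2 p).2]; linear_combination p 1 / 2 * h3
    have e3 : kochG 2 p 1 = - (Real.sqrt 3 * (1 - p 0) + p 1) / 2 := by
      rw [(G2 p).2]; ring
    change kochG 2 p 1 < 0 ∧ 0 < Real.sqrt 3 * kochG 2 p 0 + kochG 2 p 1 ∧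
      0 < Real.sqrt 3 * (1 - kochG 2 p 0) + kochG 2 p 1 ↔ _
    rw [e1, e2, e3]
    constructor
    · rintro ⟨a, b, d⟩; exact ⟨by linarith, by linarith, by linarith⟩
    · rintro ⟨a, b, d⟩; exact ⟨by linarith, by linarith, by linarith⟩

theorem G_gg (i : Fin 3) : kochG i gg = gg := by
  have h3 := sqrt3_sq
  fin_cases i
  · rfl
  · change kochG 1 gg = gg
    apply plane_ext
    · rw [(G1 _).1]; simp only [gg, pt_zero, pt_one]; linear_combination - h3 / 12
    · rw [(G1 _).2]; simp only [gg, pt_zero, pt_one]; ring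
  · change kochG 2 gg = gg
    apply plane_ext
    · rw [(G2 _).1]; simp only [gg, pt_zero, pt_one]; linear_combination h3 / 12
    · rw [(G2 _).2]; simp only [gg, pt_zero, pt_one]; ring

section
variable {l c s : ℝ}

theorem isClosed_TR : IsClosed TR := by
  simp only [TR, ofPred_and]
  refine IsClosed.inter (isClosed_le ?_ ?_) (IsClosed.inter (isClosed_le ?_ ?_)
    (isClosed_le ?_ ?_)) <;> fun_prop

theorem gg_TR : gg ∈ TR := by
  have h0 := sqrt3_pos
  refine ⟨?_, ?_, ?_⟩ <;> simp only [gg, pt_zero, pt_one] <;> linarith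

theorem gg_KT (h : KP l c s) : gg ∈ KT c s := by
  have h3 := sqrt3_sq
  have h0 := sqrt3_pos
  have := h.s0; have := h.c0
  refine ⟨?_, ?_, ?_, ?_⟩ <;> simp only [gg, pt_zero, pt_one] <;> nlinarith [mul_pos h.c0 h0]

theorem star_TR : StarAt gg TR := by
  rintro p ⟨p0, p1, p2⟩ u hu hu'
  obtain ⟨m0, m1, m2⟩ := gg_TR
  have hu1 : 0 ≤ 1 - u := by linarith
  refine ⟨?_, ?_, ?_⟩ <;>
    simp only [PiLp.add_apply, PiLp.smul_apply, PiLp.sub_apply, smul_eq_mul]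
  · nlinarith [mul_le_mul_of_nonneg_left p0 hu, mul_le_mul_of_nonneg_left m0 hu1]
  · nlinarith [mul_nonneg hu p1, mul_nonneg hu1 m1]
  · nlinarith [mul_nonneg hu p2, mul_nonneg hu1 m2]

theorem star_KT (h : KP l c s) : StarAt gg (KT c s) := by
  rintro p ⟨p0, p1, p2, p3⟩ u hu hu'
  obtain ⟨m0, m1, m2, m3⟩ := gg_KT h
  have hu1 : 0 ≤ 1 - u := by linarith
  refine ⟨?_, ?_, ?_, ?_⟩ <;>
    simp only [PiLp.add_apply, PiLp.smul_apply, PiLp.sub_apply, smul_eq_mul]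
  · nlinarith [mul_le_mul_of_nonneg_left p0 hu, mul_le_mul_of_nonneg_left m0 hu1]
  · nlinarith [mul_le_mul_of_nonneg_left p1 hu, mul_le_mul_of_nonneg_left m1 hu1]
  · nlinarith [mul_nonneg hu p2, mul_nonneg hu1 m2]
  · nlinarith [mul_nonneg hu p3, mul_nonneg hu1 m3]

theorem TT_KT (h : KP l c s) : TT c s ⊆ KT c s := by
  intro p hp
  have := TT_x0 h hp
  have := TT_x1 h hp
  have := mul_nonneg sqrt3_pos.le hp.1
  exact ⟨hp.2.1, hp.2.2, by linarith, by linarith⟩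

theorem KT_sub (p : Plane) (hp : p ∈ KT c s) : p ∈ TT c s ∨ p ∈ TR := by
  obtain ⟨a, b, d, e⟩ := hp
  have h3 := sqrt3_sq
  have h0 := sqrt3_pos
  rcases le_total 0 (p 1) with hy | hy
  · exact Or.inl ⟨hy, a, b⟩
  · refine Or.inr ⟨hy, ?_, ?_⟩
    · nlinarith [mul_nonneg h0.le d]
    · nlinarith [mul_nonneg h0.le e]

theorem TT_TR {p : Plane} (h : KP l c s) (hp : p ∈ TT c s) (hp' : p ∈ TR) : p ∈ SG :=
  ⟨le_antisymm hp'.1 hp.1, TT_x0 h hp, TT_x1 h hp⟩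

theorem pairG01 (h : KP l c s) {q q' : Plane} (hq : q ∈ TT c s) (hq' : q' ∈ TT c s)
    (he : q 1 = - Real.sqrt 3 / 2 * q' 0 - q' 1 / 2)
    (he' : q 0 = - q' 0 / 2 + Real.sqrt 3 / 2 * q' 1 + 1) : q = e1 ∧ q' = e0 := by
  have h0 := sqrt3_pos
  have x0 := TT_x0 h hq'
  have y0 := hq'.1
  have y := hq.1
  have t := mul_nonneg h0.le x0
  have hx : Real.sqrt 3 * q' 0 ≤ 0 := by nlinarith
  have hx : q' 0 ≤ 0 := by
    by_contra hn; push Not at hn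
    have := mul_pos h0 hn
    linarith
  have hq0 := eq_e0 h hq' hx
  refine ⟨eq_e1 h hq ?_, hq0⟩
  rw [he', hq0]; simp [e0, pt_zero, pt_one]

theorem pairG (h : KP l c s) {i j : Fin 3} (hij : i ≠ j) {q q' : Plane} (hq : q ∈ TT c s)
    (hq' : q' ∈ TT c s) (he : kochG i q = kochG j q') : q = e0 ∨ q = e1 := by
  have h3 := sqrt3_sq
  have P01 : ∀ q q' : Plane, q ∈ TT c s → q' ∈ TT c s → kochG 0 q = kochG 1 q' →
      q = e1 ∧ q' = e0 := by
    intro q q' hq hq' he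
    have a := congrArg (fun z : Plane => z 0) he
    have b := congrArg (fun z : Plane => z 1) he
    simp only [G0, (G1 _).1, (G1 _).2] at a b
    exact pairG01 h hq hq' b a
  have P12 : ∀ q q' : Plane, q ∈ TT c s → q' ∈ TT c s → kochG 1 q = kochG 2 q' →
      q = e1 ∧ q' = e0 := by
    intro q q' hq hq' he
    have a := congrArg (fun z : Plane => z 0) he
    have b := congrArg (fun z : Plane => z 1) he
    simp only [(G2 _).1, (G2 _).2, (G1 _).1, (G1 _).2] at a b
    refine pairG01 h hq hq' ?_ ?_
    · linear_combination (Real.sqrt 3 / 2) * a - (1/2) * b - (q 1 / 4 + q' 1 / 4) * h3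
    · linear_combination (-1/2) * a - (Real.sqrt 3 / 2) * b + (1/4 - q 0 / 4 - q' 0 / 4) * h3
  have P20 : ∀ q q' : Plane, q ∈ TT c s → q' ∈ TT c s → kochG 2 q = kochG 0 q' →
      q = e1 ∧ q' = e0 := by
    intro q q' hq hq' he
    have a := congrArg (fun z : Plane => z 0) he
    have b := congrArg (fun z : Plane => z 1) he
    simp only [(G2 _).1, (G2 _).2, G0] at a b
    refine pairG01 h hq hq' ?_ ?_
    · linear_combination (- Real.sqrt 3 / 2) * a - (1/2) * b - (q 1 / 4) * h3
    · linear_combination (-1/2) * a + (Real.sqrt 3 / 2) * b + (1/4 - q 0 / 4) * h3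
  fin_cases i <;> fin_cases j
  · exact absurd rfl hij
  · exact Or.inr (P01 _ _ hq hq' he).1
  · exact Or.inl (P20 _ _ hq' hq he.symm).2
  · exact Or.inl (P01 _ _ hq' hq he.symm).2
  · exact absurd rfl hij
  · exact Or.inr (P12 _ _ hq hq' he).1
  · exact Or.inr (P20 _ _ hq hq' he).1
  · exact Or.inl (P12 _ _ hq' hq he.symm).2
  · exact absurd rfl hij

/-- The global approximating sets. -/
def XX (l c s : ℝ) (n : ℕ) : Set Plane := TR ∪ ⋃ i, kochG i '' CC l c s n

theorem isClosed_XX (h : KP l c s) (n : ℕ) : IsClosed (XX l c s n) :=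
  isClosed_TR.union (isClosed_iUnion_of_finite fun i => (simG i).isClosed_image (isClosed_CC h n))

theorem XX_inter (h : KP l c s) (n : ℕ) (i : Fin 3) :
    XX l c s n ∩ kochG i '' TT c s ⊆ kochG i '' CC l c s n := by
  rintro _ ⟨hp, q, hq, rfl⟩
  refine ⟨q, ?_, rfl⟩
  rcases hp with hB | hF
  · exact SG_sub_CC h n (TT_TR h hq ((G_TR i).1 hB))
  · obtain ⟨j, q', hq', he⟩ := mem_iUnion.1 hF
    by_cases hij : i = j
    · subst hij
      rwa [← (simG i).injective he]
    · rcases pairG h hij hq (CC_sub_TT h n hq') he.symm with rfl | rfl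
      · exact SG_sub_CC h n e0_mem_SG
      · exact SG_sub_CC h n e1_mem_SG

theorem full_XX (h : KP l c s) (n : ℕ) : Full (XX l c s n) := by
  intro V hV hVc hb hf hd
  have hd' := Set.disjoint_left.1 hd
  have hfin : ∀ i, V ⊆ kochG i '' TT c s → V = ∅ := fun i hi =>
    (full_CC h n).pull (simG i) (bounded_TT h) isClosed_TT hV hVc hi hf (XX_inter h n i)
      (fun z hz => Or.inr (mem_iUnion.2 ⟨i, hz⟩)) hd
  have hcl : ∀ i, IsClosed (kochG i '' TT c s) := fun i => (simG i).isClosed_image isClosed_TT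
  have hst : StarAt gg (TR ∪ ⋃ i, kochG i '' KT c s) := by
    refine star_TR.union ?_
    intro p hp u hu hu'
    obtain ⟨i, hi⟩ := mem_iUnion.1 hp
    have := (star_KT h).image (simG i)
    rw [G_gg] at this
    exact mem_iUnion.2 ⟨i, this p hi u hu hu'⟩
  have hV1 : V ⊆ TR ∪ ⋃ i, kochG i '' KT c s := by
    refine subset_of_star hV hb (fun z hz => ?_) (Or.inl gg_TR) hst
    rcases hf hz with h1 | h1
    · exact Or.inl h1
    · obtain ⟨i, q, hq, rfl⟩ := mem_iUnion.1 h1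
      exact Or.inr (mem_iUnion.2 ⟨i, q, TT_KT h (CC_sub_TT h n hq), rfl⟩)
  have hV2 : ∀ x ∈ V, ∃ i, x ∈ kochG i '' TT c s := by
    intro x hx
    rcases hV1 hx with h1 | h1
    · exact (hd' hx (Or.inl h1)).elim
    · obtain ⟨i, q, hq, rfl⟩ := mem_iUnion.1 h1
      rcases KT_sub q hq with h2 | h2
      · exact ⟨i, q, h2, rfl⟩
      · exact (hd' hx (Or.inl ((G_TR i).2 h2))).elim
  have hV3 : ∀ x ∈ V, ∀ i j, i ≠ j → x ∈ kochG i '' TT c s → x ∈ kochG j '' TT c s → False := by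
    rintro x hx i j hij ⟨q, hq, rfl⟩ ⟨q', hq', he⟩
    apply hd' hx
    refine Or.inr (mem_iUnion.2 ⟨i, q, ?_, rfl⟩)
    rcases pairG h hij hq hq' he.symm with rfl | rfl
    · exact SG_sub_CC h n e0_mem_SG
    · exact SG_sub_CC h n e1_mem_SG
  rcases subset_or_of_closed hVc (hcl 0) ((hcl 1).union (hcl 2)) (fun x hx => by
      obtain ⟨i, hi⟩ := hV2 x hx
      fin_cases i
      · exact Or.inl hi
      · exact Or.inr (Or.inl hi)
      · exact Or.inr (Or.inr hi)) (fun x hx h1 h2 => by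
      rcases h2 with h2 | h2
      · exact hV3 x hx 0 1 (by decide) h1 h2
      · exact hV3 x hx 0 2 (by decide) h1 h2) with h1 | h1
  · exact hfin 0 h1
  · rcases subset_or_of_closed hVc (hcl 1) (hcl 2) h1
      (fun x hx h1 h2 => hV3 x hx 1 2 (by decide) h1 h2) with h1 | h1
    · exact hfin 1 h1
    · exact hfin 2 h1

end


/-! ### Facts about the Koch curve -/

/-- `K` is an invariant compact set for the Koch maps. -/
structure IsKoch (l : ℝ) (K : Set Plane) : Prop where
  ne : K.Nonempty
  comp : IsCompact K
  eq : K = kochF l 0 '' K ∪ kochF l 1 '' K ∪ kochF l 2 '' K ∪ kochF l 3 '' K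

section
variable {l c s : ℝ} {K : Set Plane}

theorem IsKoch.split (hK : IsKoch l K) {p : Plane} (hp : p ∈ K) : ∃ i, ∃ q ∈ K, kochF l i q = p := by
  rw [hK.eq] at hp
  rcases hp with ((hp | hp) | hp) | hp
  · exact ⟨0, hp⟩
  · exact ⟨1, hp⟩
  · exact ⟨2, hp⟩
  · exact ⟨3, hp⟩

theorem IsKoch.map (hK : IsKoch l K) (i : Fin 4) {p : Plane} (hp : p ∈ K) : kochF l i p ∈ K := by
  rw [hK.eq]
  fin_cases i
  · exact Or.inl (Or.inl (Or.inl ⟨p, hp, rfl⟩))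
  · exact Or.inl (Or.inl (Or.inr ⟨p, hp, rfl⟩))
  · exact Or.inl (Or.inr ⟨p, hp, rfl⟩)
  · exact Or.inr ⟨p, hp, rfl⟩

theorem K_sub_TT (h : KP l c s) (hK : IsKoch l K) : K ⊆ TT c s := by
  have hne : (TT c s).Nonempty := ⟨e0, e0_mem_TT h⟩
  obtain ⟨p, hp, hmax⟩ := hK.comp.exists_isMaxOn hK.ne
    (continuous_infDist_pt (TT c s)).continuousOn
  obtain ⟨i, q, hq, rfl⟩ := hK.split hp
  have h1 : infDist (kochF l i q) (TT c s) / l ≤ infDist q (TT c s) := by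
    rw [le_infDist hne]
    intro t ht
    rw [div_le_iff₀ h.lpos, mul_comm, ← (h.sim i).dist_map]
    exact infDist_le_dist_of_mem (F_TT h i ht)
  rw [div_le_iff₀ h.lpos] at h1
  have h2 : infDist q (TT c s) ≤ infDist (kochF l i q) (TT c s) := hmax hq
  have h3 : infDist (kochF l i q) (TT c s) ≤ 0 := by
    have := h.l2
    have := infDist_nonneg (x := kochF l i q) (s := TT c s)
    have := infDist_nonneg (x := q) (s := TT c s)
    nlinarith
  intro x hx
  have h4 : infDist x (TT c s) ≤ infDist (kochF l i q) (TT c s) := hmax hx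
  rw [isClosed_TT.mem_iff_infDist_zero hne]
  exact le_antisymm (h4.trans h3) infDist_nonneg

theorem fixed_mem (h : KP l c s) (hK : IsKoch l K) (i : Fin 4) {e : Plane}
    (he : kochF l i e = e) : e ∈ K := by
  obtain ⟨q, hq, hd⟩ := hK.comp.exists_infDist_eq_dist hK.ne e
  have h1 : infDist e K ≤ dist e (kochF l i q) := infDist_le_dist_of_mem (hK.map i hq)
  have h2 : dist e (kochF l i q) = l * dist e q := by
    rw [← (h.sim i).dist_map, he]
  rw [h2, hd] at h1
  have h3 : dist e q ≤ 0 := by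
    have := h.l2
    have := dist_nonneg (x := e) (y := q)
    nlinarith
  rwa [dist_le_zero.1 h3]

theorem F0_e0 (h : KP l c s) : kochF l 0 e0 = e0 := by
  apply plane_ext
  · rw [(h.F0 _).1]; simp [e0, pt_zero]
  · rw [(h.F0 _).2]; simp [e0, pt_one]

theorem F3_e1 (h : KP l c s) : kochF l 3 e1 = e1 := by
  apply plane_ext
  · rw [(h.F3 _).1]; simp [e1, pt_zero]
  · rw [(h.F3 _).2]; simp [e1, pt_one]

theorem e0_mem_K (h : KP l c s) (hK : IsKoch l K) : e0 ∈ K := fixed_mem h hK 0 (F0_e0 h)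
theorem e1_mem_K (h : KP l c s) (hK : IsKoch l K) : e1 ∈ K := fixed_mem h hK 3 (F3_e1 h)

theorem K_inter (h : KP l c s) (hK : IsKoch l K) (i : Fin 4) {q : Plane} (hq : q ∈ TT c s)
    (hp : kochF l i q ∈ K) : q ∈ K := by
  obtain ⟨j, q', hq', he⟩ := hK.split hp
  by_cases hij : i = j
  · subst hij
    rwa [← (h.sim i).injective he]
  · rcases pairF h hij hq (K_sub_TT h hK hq') he.symm with rfl | rfl
    · exact e0_mem_K h hK
    · exact e1_mem_K h hK

theorem K_BP (h : KP l c s) (hK : IsKoch l K) {p : Plane} (hp : p ∈ K) : p ∉ BP l c s := by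
  obtain ⟨i, q, hq, rfl⟩ := hK.split hp
  exact BP_F h (K_sub_TT h hK hq)

theorem K_sub_CC (h : KP l c s) (hK : IsKoch l K) (n : ℕ) : K ⊆ CC l c s n := by
  induction n with
  | zero => exact K_sub_TT h hK
  | succ n ih =>
    intro p hp
    obtain ⟨i, q, hq, rfl⟩ := hK.split hp
    exact Or.inr (mem_iUnion.2 ⟨i, q, ih hq, rfl⟩)

theorem mem_bd {p : Plane} : p ∈ snowflakeBoundary K ↔ ∃ i, ∃ q ∈ K, kochG i q = p := by
  constructor
  · rintro ((hp | hp) | hp)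
    · exact ⟨0, hp⟩
    · exact ⟨1, hp⟩
    · exact ⟨2, hp⟩
  · rintro ⟨i, q, hq, rfl⟩
    fin_cases i
    · exact Or.inl (Or.inl ⟨q, hq, rfl⟩)
    · exact Or.inl (Or.inr ⟨q, hq, rfl⟩)
    · exact Or.inr ⟨q, hq, rfl⟩

theorem isClosed_bd (hK : IsKoch l K) : IsClosed (snowflakeBoundary K) := by
  have := fun i => (simG i).isClosed_image hK.comp.isClosed
  exact ((this 0).union (this 1)).union (this 2)

theorem bd_ne (hK : IsKoch l K) : (snowflakeBoundary K).Nonempty := by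
  obtain ⟨p, hp⟩ := hK.ne
  exact ⟨_, mem_bd.2 ⟨0, p, hp, rfl⟩⟩

theorem bd_inter (h : KP l c s) (hK : IsKoch l K) (i : Fin 3) {q : Plane} (hq : q ∈ TT c s)
    (hp : kochG i q ∈ snowflakeBoundary K) : q ∈ K := by
  obtain ⟨j, q', hq', he⟩ := mem_bd.1 hp
  by_cases hij : i = j
  · subst hij
    rwa [← (simG i).injective he]
  · rcases pairG h hij hq (K_sub_TT h hK hq') he.symm with rfl | rfl
    · exact e0_mem_K h hK
    · exact e1_mem_K h hK

theorem bd_TRo (h : KP l c s) (hK : IsKoch l K) {p : Plane} (hp : p ∈ snowflakeBoundary K) :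
    p ∉ TRo := by
  obtain ⟨i, q, hq, rfl⟩ := mem_bd.1 hp
  rw [G_TRo]
  intro hT
  exact absurd hT.1 (not_lt.2 (K_sub_TT h hK hq).1)

theorem bd_XX (h : KP l c s) (hK : IsKoch l K) (n : ℕ) : snowflakeBoundary K ⊆ XX l c s n := by
  intro p hp
  obtain ⟨i, q, hq, rfl⟩ := mem_bd.1 hp
  exact Or.inr (mem_iUnion.2 ⟨i, q, K_sub_CC h hK n hq, rfl⟩)

theorem EE_TRo (h : KP l c s) {p : Plane} (hp : p ∈ EE c s) : p ∈ TRo := by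
  obtain ⟨h0, h1, h2⟩ := hp
  have h3 := sqrt3_sq
  have hs3 := sqrt3_pos
  have hs := h.s0; have hc := h.c0
  have hge : Real.sqrt 3 * c ≤ s := by
    apply (sq_le_sq₀ (by positivity) hs.le).1
    have := s2_ge h
    rw [mul_pow, h3]; exact this
  have key : 0 ≤ Real.sqrt 3 * (s ^ 2 - c ^ 2) - 2 * s * c := by
    have e : Real.sqrt 3 * (s ^ 2 - c ^ 2) - 2 * s * c
        = (s - Real.sqrt 3 * c) * (Real.sqrt 3 * s + c) := by linear_combination s * c * h3
    rw [e]
    exact mul_nonneg (by linarith) (by positivity)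
  have hsc : 0 < 2 * s * c := by positivity
  have t := mul_nonneg key (neg_nonneg.2 h0.le)
  refine ⟨h0, ?_, ?_⟩
  · have := mul_pos hs3 h1
    refine pos_of_mul_pos_right (a := 2 * s * c) ?_ hsc.le
    nlinarith
  · have := mul_pos hs3 h2
    refine pos_of_mul_pos_right (a := 2 * s * c) ?_ hsc.le
    nlinarith

theorem EE_F (h : KP l c s) (i : Fin 4) {p : Plane} (hp : p ∈ EE c s) :
    kochF l i p ∈ EE c s ∨ kochF l i p ∈ BP l c s := by
  obtain ⟨h0, h1, h2⟩ := hp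
  have hs := h.s0; have hc := h.c0; have hl := h.lpos; have hl2 := h.l2; have hlc := h.lc
  have hcs := h.cs
  have hge := s2_ge h
  have a1 := mul_pos hl h1
  have a2 := mul_pos hl h2
  have a0 := mul_pos hl (neg_pos.2 h0)
  have hsc : 0 < s * c * (1 - l) := by
    have : 0 < 1 - l := by linarith
    positivity
  have ty := mul_nonneg (sub_nonneg.2 hge) (neg_nonneg.2 h0.le)
  have b1 : 0 < s * p 0 + c * p 1 := by
    refine pos_of_mul_pos_right (a := 2 * c) ?_ (by positivity)
    nlinarith
  have b2 : 0 < s * (1 - p 0) + c * p 1 := by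
    refine pos_of_mul_pos_right (a := 2 * c) ?_ (by positivity)
    nlinarith
  have b1' := mul_pos hl b1
  have b2' := mul_pos hl b2
  fin_cases i
  · left
    refine ⟨?_, ?_, ?_⟩
    · change kochF l 0 p 1 < 0
      rw [(h.F0 _).2]; linarith
    · change 0 < 2 * s * c * kochF l 0 p 0 + (s ^ 2 - c ^ 2) * kochF l 0 p 1
      rw [(h.F0 _).2, (h.F0 _).1]; linarith
    · change 0 < 2 * s * c * (1 - kochF l 0 p 0) + (s ^ 2 - c ^ 2) * kochF l 0 p 1
      rw [(h.F0 _).2, (h.F0 _).1]; linarith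
  · right
    refine ⟨?_, ?_, ?_⟩
    · change 0 ≤ kochF l 1 p 1
      rw [(h.F1 _).2]; linarith
    · change 0 < s * (kochF l 1 p 0 - l) - c * kochF l 1 p 1
      rw [leg1 h]; linarith
    · change 0 < s * (1 - l - kochF l 1 p 0) - c * kochF l 1 p 1
      have : s * (1 - l - kochF l 1 p 0) - c * kochF l 1 p 1
          = l * (2 * s * c * (1 - p 0) + (s ^ 2 - c ^ 2) * p 1) := by
        rw [(h.F1 _).2, (h.F1 _).1]; linear_combination (-s) * hlc
      rw [this]; exact a2
  · right
    refine ⟨?_, ?_, ?_⟩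
    · change 0 ≤ kochF l 2 p 1
      rw [(h.F2 _).2]; linarith
    · change 0 < s * (kochF l 2 p 0 - l) - c * kochF l 2 p 1
      have : s * (kochF l 2 p 0 - l) - c * kochF l 2 p 1
          = l * (2 * s * c * p 0 + (s ^ 2 - c ^ 2) * p 1) := by
        rw [(h.F2 _).2, (h.F2 _).1]; linear_combination (- s / 2) * hlc
      rw [this]; exact a1
    · change 0 < s * (1 - l - kochF l 2 p 0) - c * kochF l 2 p 1
      rw [leg2 h]; linarith
  · left
    refine ⟨?_, ?_, ?_⟩
    · change kochF l 3 p 1 < 0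
      rw [(h.F3 _).2]; linarith
    · change 0 < 2 * s * c * kochF l 3 p 0 + (s ^ 2 - c ^ 2) * kochF l 3 p 1
      rw [(h.F3 _).2, (h.F3 _).1]; linarith
    · change 0 < 2 * s * c * (1 - kochF l 3 p 0) + (s ^ 2 - c ^ 2) * kochF l 3 p 1
      rw [(h.F3 _).2, (h.F3 _).1]; linarith

/-- The compositions of the placement maps and the Koch maps. -/
inductive Adm (l : ℝ) : (Plane → Plane) → ℝ → Prop
  | base (i : Fin 3) : Adm l (kochG i) 1
  | step {S : Plane → Plane} {r : ℝ} (i : Fin 4) (h : Adm l S r) : Adm l (S ∘ kochF l i) (l * r)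

theorem Adm.sim (h : KP l c s) {S : Plane → Plane} {r : ℝ} (hS : Adm l S r) : IsSim S r := by
  induction hS with
  | base i => exact simG i
  | step i _ ih => exact ih.comp (h.sim i)

theorem Adm.inter (h : KP l c s) (hK : IsKoch l K) {S : Plane → Plane} {r : ℝ} (hS : Adm l S r) :
    ∀ q ∈ TT c s, S q ∈ snowflakeBoundary K → q ∈ K := by
  induction hS with
  | base i => intro q hq hp; exact bd_inter h hK i hq hp
  | step i _ ih =>
    intro q hq hp
    exact K_inter h hK i hq (ih _ (F_TT h i hq) hp)

theorem Adm.BP_free (h : KP l c s) (hK : IsKoch l K) {S : Plane → Plane} {r : ℝ}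
    (hS : Adm l S r) {q : Plane} (hq : q ∈ BP l c s) : S q ∉ snowflakeBoundary K := fun hp =>
  K_BP h hK (hS.inter h hK q (BB_sub_TT h ⟨hq.1, hq.2.1.le, hq.2.2.le⟩) hp) hq

theorem Adm.EE_free (h : KP l c s) (hK : IsKoch l K) {S : Plane → Plane} {r : ℝ}
    (hS : Adm l S r) : ∀ q ∈ EE c s, S q ∉ snowflakeBoundary K := by
  induction hS with
  | base i =>
    intro q hq hp
    exact bd_TRo h hK hp ((G_TRo i).2 (EE_TRo h hq))
  | step i hS ih =>
    intro q hq hp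
    rcases EE_F h i hq with h1 | h1
    · exact ih _ h1 hp
    · exact hS.BP_free h hK h1 hp

end

/-! ### John curves -/

/-- `x` is joined to `y` by a John curve of length `t` relative to the obstacle `Γ`. -/
def JP (Γ : Set Plane) (J : ℝ) (x : Plane) (t : ℝ) (y : Plane) : Prop :=
  0 ≤ t ∧ ∃ γ : ℝ → Plane, LipschitzOnWith 1 γ (Icc 0 t) ∧ γ 0 = x ∧ γ t = y ∧
    ∀ τ ∈ Icc 0 t, ∀ z ∈ Γ, J * τ ≤ dist (γ τ) z

theorem JP.refl (Γ : Set Plane) (J : ℝ) (x : Plane) : JP Γ J x 0 x := by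
  refine ⟨le_rfl, fun _ => x, ?_, rfl, rfl, ?_⟩
  · exact (LipschitzWith.const x).lipschitzOnWith.weaken zero_le_one
  · rintro τ ⟨h0, h1⟩ z _
    rw [le_antisymm h1 h0, mul_zero]; exact dist_nonneg

theorem JP.trans {Γ : Set Plane} {J : ℝ} {x y y' : Plane} {t t' : ℝ} (h : JP Γ J x t y)
    (htt : t ≤ t') (hd : dist y y' ≤ t' - t)
    (hz : ∀ u : ℝ, 0 ≤ u → u ≤ 1 → ∀ z ∈ Γ, J * (t + u * (t' - t)) ≤ dist (y + u • (y' - y)) z) :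
    JP Γ J x t' y' := by
  rcases htt.eq_or_lt with rfl | hlt
  · rw [sub_self] at hd
    rwa [← dist_le_zero.1 hd]
  obtain ⟨ht0, γ, hγ, hγ0, hγt, hγz⟩ := h
  have hpos : 0 < t' - t := by linarith
  have hγd := lipschitzOnWith_iff_dist_le_mul.1 hγ
  simp only [NNReal.coe_one, one_mul] at hγd
  let g : ℝ → Plane := fun τ => y + ((τ - t) / (t' - t)) • (y' - y)
  have hg : ∀ a b, dist (g a) (g b) ≤ |a - b| := by
    intro a b
    have e : g a - g b = ((a - b) / (t' - t)) • (y' - y) := by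
      simp only [g, add_sub_add_left_eq_sub, ← sub_smul]
      congr 1; field_simp; ring
    rw [dist_eq_norm, e, norm_smul, Real.norm_eq_abs, abs_div, abs_of_pos hpos, ← dist_eq_norm,
      dist_comm, div_mul_eq_mul_div, div_le_iff₀ hpos]
    exact mul_le_mul_of_nonneg_left hd (abs_nonneg _)
  have hgt : g t = y := by simp [g]
  have hgt' : g t' = y' := by simp [g, div_self hpos.ne']
  refine ⟨ht0.trans htt, fun τ => if τ ≤ t then γ τ else g τ, ?_, ?_, ?_, ?_⟩
  · rw [lipschitzOnWith_iff_dist_le_mul]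
    have key : ∀ a ∈ Icc 0 t', ∀ b ∈ Icc 0 t', a ≤ b →
        dist (if a ≤ t then γ a else g a) (if b ≤ t then γ b else g b) ≤ dist a b := by
      intro a ha b hb hab
      by_cases hbt : b ≤ t
      · rw [if_pos (hab.trans hbt), if_pos hbt]
        exact hγd a ⟨ha.1, hab.trans hbt⟩ b ⟨hb.1, hbt⟩
      · rw [if_neg hbt]
        push Not at hbt
        by_cases hat : a ≤ t
        · rw [if_pos hat]
          have h1 := hγd a ⟨ha.1, hat⟩ t ⟨ht0, le_rfl⟩
          rw [hγt] at h1
          have h2 := hg t b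
          rw [hgt] at h2
          rw [Real.dist_eq, abs_of_nonpos (by linarith)] at h1 ⊢
          rw [abs_of_nonpos (by linarith)] at h2
          linarith [dist_triangle (γ a) y (g b)]
        · rw [if_neg hat]
          exact hg a b
    intro a ha b hb
    rw [NNReal.coe_one, one_mul]
    rcases le_total a b with hab | hab
    · exact key a ha b hb hab
    · rw [dist_comm, dist_comm a]
      exact key b hb a ha hab
  · simp only [if_pos ht0, hγ0]
  · simp only [if_neg (not_le.2 hlt), hgt']
  · intro τ hτ z hzΓ
    by_cases h1 : τ ≤ t
    · simp only [if_pos h1]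
      exact hγz τ ⟨hτ.1, h1⟩ z hzΓ
    · simp only [if_neg h1]
      push Not at h1
      have := hz ((τ - t) / (t' - t)) (div_nonneg (by linarith) hpos.le)
        ((div_le_one hpos).2 (by linarith [hτ.2])) z hzΓ
      rwa [div_mul_cancel₀ _ hpos.ne', add_sub_cancel] at this

section
variable {l c s ρ : ℝ} {K : Set Plane}

/-- The scale free data of the stations. -/
structure RP (l c s ρ : ℝ) : Prop where
  kp : KP l c s
  rs : 2 * s * ρ = 1

theorem RP.pos (h : RP l c s ρ) : 0 < ρ := by
  have h1 := h.rs
  have h2 := h.kp.s0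
  by_contra hn; push Not at hn
  nlinarith

theorem RP.ls (h : RP l c s ρ) : l * s + c * ρ = ρ := by
  have h1 := h.rs; have h2 := h.kp.s0; have h3 := h.kp.cs; have h4 := h.kp.lc
  have : (2 * s) * (l * s + c * ρ) = (2 * s) * ρ := by
    linear_combination (2 * l) * h3 + (c - 1) * h1 + (1 - c) * h4
  exact mul_left_cancel₀ (by positivity) this

/-- The station. -/
def PP (c ρ : ℝ) : Plane := pt (1 / 2) (- (c * ρ))

/-- The circumcenter of the tooth. -/
def oo (l c ρ : ℝ) : Plane := pt (1 / 2) (ρ * (1 - c - l))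

theorem PP0 : PP c ρ 0 = 1 / 2 := pt_zero _ _
theorem PP1 : PP c ρ 1 = - (c * ρ) := pt_one _ _
theorem oo0 : oo l c ρ 0 = 1 / 2 := pt_zero _ _
theorem oo1 : oo l c ρ 1 = ρ * (1 - c - l) := pt_one _ _

theorem lerp0 (p q : Plane) (u : ℝ) : (p + u • (q - p)) 0 = p 0 + u * (q 0 - p 0) := by simp
theorem lerp1 (p q : Plane) (u : ℝ) : (p + u • (q - p)) 1 = p 1 + u * (q 1 - p 1) := by simp

theorem F1_P (h : RP l c s ρ) : kochF l 1 (PP c ρ) = oo l c ρ := by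
  have h1 := h.rs; have h3 := h.kp.cs; have h4 := h.kp.lc; have h5 := h.ls
  apply plane_ext
  · rw [(h.kp.F1 _).1, PP0, PP1, oo0]
    linear_combination (l * c) * h1 / 2 + h4 / 2
  · rw [(h.kp.F1 _).2, PP0, PP1, oo1]
    linear_combination h5 + (l * s / 2) * h1 - l * ρ * h3

theorem F2_P (h : RP l c s ρ) : kochF l 2 (PP c ρ) = oo l c ρ := by
  have h1 := h.rs; have h3 := h.kp.cs; have h4 := h.kp.lc; have h5 := h.ls
  apply plane_ext
  · rw [(h.kp.F2 _).1, PP0, PP1, oo0]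
    linear_combination (-l * c) * h1 / 2
  · rw [(h.kp.F2 _).2, PP0, PP1, oo1]
    linear_combination h5 + (l * s / 2) * h1 - l * ρ * h3

theorem nrm2 (h : KP l c s) : (2 * s * c) ^ 2 + (s ^ 2 - c ^ 2) ^ 2 = 1 := by
  linear_combination (c ^ 2 + s ^ 2 + 1) * h.cs

theorem ball_left (h : KP l c s) {q w : Plane} {r : ℝ} (hd : dist q w < r)
    (hr : r ≤ 2 * s * c * q 0 + (s ^ 2 - c ^ 2) * q 1) :
    0 < 2 * s * c * w 0 + (s ^ 2 - c ^ 2) * w 1 := by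
  linarith [lin_bound (nrm2 h) w q]

theorem ball_right (h : KP l c s) {q w : Plane} {r : ℝ} (hd : dist q w < r)
    (hr : r ≤ 2 * s * c * (1 - q 0) + (s ^ 2 - c ^ 2) * q 1) :
    0 < 2 * s * c * (1 - w 0) + (s ^ 2 - c ^ 2) * w 1 := by
  linarith [lin_bound (a := - (2 * s * c)) (b := s ^ 2 - c ^ 2) (by linarith [nrm2 h]) w q]

theorem ball_leg1 (h : KP l c s) {q w : Plane} {r : ℝ} (hd : dist q w < r)
    (hr : r ≤ s * (q 0 - l) - c * q 1) : 0 < s * (w 0 - l) - c * w 1 := by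
  linarith [lin_bound (a := s) (b := - c) (by linarith [h.cs]) w q]

theorem ball_leg2 (h : KP l c s) {q w : Plane} {r : ℝ} (hd : dist q w < r)
    (hr : r ≤ s * (1 - l - q 0) - c * q 1) : 0 < s * (1 - l - w 0) - c * w 1 := by
  linarith [lin_bound (a := - s) (b := - c) (by linarith [h.cs]) w q]

theorem ball_neg {q w : Plane} {r : ℝ} (hd : dist q w < r) (hr : q 1 + r ≤ 0) : w 1 < 0 := by
  linarith [lin_bound (a := 0) (b := - 1) (by norm_num) w q]

theorem ball_pos {q w : Plane} {r : ℝ} (hd : dist q w < r) (hr : r ≤ q 1) : 0 < w 1 := by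
  linarith [lin_bound (a := 0) (b := 1) (by norm_num) w q]

theorem sc_eq (h : RP l c s ρ) : s * c = 2 * s ^ 2 * (c * ρ) := by
  linear_combination (- s * c) * h.rs

/-- Moving along the ray from the left corner. -/
theorem loc0 (h : RP l c s ρ) {q w : Plane} {v : ℝ} (hv1 : v ≤ 1)
    (q0 : q 0 = v / 2 ∨ q 0 = 1 - v / 2) (q1 : q 1 = - (v * (c * ρ))) (hw : w ∉ EE c s) :
    c * (v * ρ) ≤ dist q w := by
  by_contra hn; push Not at hn
  have hsc := sc_eq h
  have hcs := h.kp.cs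
  have hp : 0 < s * c := mul_pos h.kp.s0 h.kp.c0
  have e : s * c * v + (s ^ 2 - c ^ 2) * (- (v * (c * ρ))) = c * (v * ρ) := by
    linear_combination v * hsc + v * c * ρ * hcs
  have e2 : 0 ≤ (s * c) * (1 - v) := mul_nonneg hp.le (by linarith)
  apply hw
  refine ⟨ball_neg hn (by rw [q1]; linarith), ball_left h.kp hn ?_, ball_right h.kp hn ?_⟩
  · rw [q1]; rcases q0 with q0 | q0 <;> rw [q0] <;> linarith
  · rw [q1]; rcases q0 with q0 | q0 <;> rw [q0] <;> linarith

/-- Moving down the axis from the tooth. -/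
theorem loc1 (h : RP l c s ρ) {q w : Plane} {v : ℝ} (hv : 0 ≤ v)
    (q0 : q 0 = 1 / 2) (q1 : q 1 = - (c * ρ) + v) (hw : w ∉ EE c s) (hw' : w ∉ BP l c s) :
    c * (ρ - v) ≤ dist q w := by
  by_contra hn; push Not at hn
  have hsc := sc_eq h
  have hcs := h.kp.cs
  have hlc := h.kp.lc
  have hls := h.ls
  have hge := s2_ge h.kp
  have hc := h.kp.c0
  have e : s * c + (s ^ 2 - c ^ 2) * (- (c * ρ)) = c * ρ := by
    linear_combination hsc + c * ρ * hcs
  have e2 : 0 ≤ v * (s ^ 2 - c ^ 2 + c) := mul_nonneg hv (by nlinarith [sq_nonneg c])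
  have e3 : s * (1 / 2 - l) - c * (- (c * ρ) + v) = c * (ρ - v) := by
    linear_combination c * hls - s / 2 * hlc
  rcases lt_or_ge (w 1) 0 with h0 | h0
  · apply hw
    refine ⟨h0, ball_left h.kp hn ?_, ball_right h.kp hn ?_⟩
    · rw [q0, q1]; linarith
    · rw [q0, q1]; linarith
  · apply hw'
    refine ⟨h0, ball_leg1 h.kp hn ?_, ball_leg2 h.kp hn ?_⟩
    · rw [q0, q1]; linarith
    · rw [q0, q1]; linarith

/-- From a station to the next larger one. -/
theorem loc_step (h : RP l c s ρ) (i : Fin 4) {w : Plane} (hw : w ∉ EE c s) (hw' : w ∉ BP l c s)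
    {u : ℝ} (hu : 0 ≤ u) (hu1 : u ≤ 1) :
    c * (l * ρ + u * (ρ - l * ρ)) ≤
      dist (kochF l i (PP c ρ) + u • (PP c ρ - kochF l i (PP c ρ))) w := by
  have hl2 := h.kp.l2
  have hl := h.kp.lpos
  have hv : 0 ≤ l + u * (1 - l) := by nlinarith
  have hv1 : l + u * (1 - l) ≤ 1 := by nlinarith
  have hvv : 0 ≤ (1 - u) * ((1 - l) * ρ) :=
    mul_nonneg (by linarith) (mul_nonneg (by linarith) h.pos.le)
  have hF : ∀ i, kochF l i (PP c ρ) = oo l c ρ → c * (l * ρ + u * (ρ - l * ρ)) ≤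
      dist (kochF l i (PP c ρ) + u • (PP c ρ - kochF l i (PP c ρ))) w := by
    intro i hi
    rw [hi]
    refine le_trans (le_of_eq ?_) (loc1 h hvv ?_ ?_ hw hw')
    · ring
    · rw [lerp0, oo0, PP0]; ring
    · rw [lerp1, oo1, PP1]; ring
  fin_cases i
  · change _ ≤ dist (kochF l 0 (PP c ρ) + u • (PP c ρ - kochF l 0 (PP c ρ))) w
    refine le_trans (le_of_eq ?_) (loc0 h hv1 (Or.inl ?_) ?_ hw)
    · ring
    · rw [lerp0, (h.kp.F0 _).1, PP0]; ring
    · rw [lerp1, (h.kp.F0 _).2, PP1]; ring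
  · exact hF 1 (F1_P h)
  · exact hF 2 (F2_P h)
  · change _ ≤ dist (kochF l 3 (PP c ρ) + u • (PP c ρ - kochF l 3 (PP c ρ))) w
    refine le_trans (le_of_eq ?_) (loc0 h hv1 (Or.inr ?_) ?_ hw)
    · ring
    · rw [lerp0, (h.kp.F3 _).1, PP0]; ring
    · rw [lerp1, (h.kp.F3 _).2, PP1]; ring

theorem dist_step (h : RP l c s ρ) (i : Fin 4) :
    dist (kochF l i (PP c ρ)) (PP c ρ) ≤ ρ - l * ρ := by
  have hl2 := h.kp.l2
  have hρ := h.pos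
  have h0 : 0 ≤ ρ - l * ρ := by nlinarith
  have hcs := h.kp.cs
  have hrs := h.rs
  have e4 : s ^ 2 * ρ ^ 2 = 1 / 4 := by linear_combination (2 * s * ρ + 1) / 4 * hrs
  apply dist_le_of h0
  fin_cases i
  · change (kochF l 0 (PP c ρ) 0 - _) ^ 2 + (kochF l 0 (PP c ρ) 1 - _) ^ 2 ≤ _
    rw [(h.kp.F0 _).1, (h.kp.F0 _).2, PP0, PP1]
    apply le_of_eq
    linear_combination (1 - l) ^ 2 * (ρ ^ 2 * hcs - e4)
  · change (kochF l 1 (PP c ρ) 0 - _) ^ 2 + (kochF l 1 (PP c ρ) 1 - _) ^ 2 ≤ _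
    rw [F1_P h, oo0, oo1, PP0, PP1]
    apply le_of_eq; ring
  · change (kochF l 2 (PP c ρ) 0 - _) ^ 2 + (kochF l 2 (PP c ρ) 1 - _) ^ 2 ≤ _
    rw [F2_P h, oo0, oo1, PP0, PP1]
    apply le_of_eq; ring
  · change (kochF l 3 (PP c ρ) 0 - _) ^ 2 + (kochF l 3 (PP c ρ) 1 - _) ^ 2 ≤ _
    rw [(h.kp.F3 _).1, (h.kp.F3 _).2, PP0, PP1]
    apply le_of_eq
    linear_combination (1 - l) ^ 2 * (ρ ^ 2 * hcs - e4)

/-- From a point of the tooth to its circumcenter. -/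
theorem loc_tooth (h : RP l c s ρ) {x w : Plane} (hx : x ∈ BB l c s) (hw : w ∉ BP l c s)
    {u : ℝ} (hu : 0 ≤ u) (hu1 : u ≤ 1) :
    c * (u * (l * ρ)) ≤ dist (x + u • (oo l c ρ - x)) w := by
  by_contra hn; push Not at hn
  obtain ⟨x0, x1, x2⟩ := hx
  have hu' : 0 ≤ 1 - u := by linarith
  have hls := h.ls
  have hlc := h.kp.lc
  have hρ := h.pos
  have a0 := mul_nonneg hu' x0
  have a1 := mul_nonneg hu' x1
  have a2 := mul_nonneg hu' x2
  have e0 : 0 ≤ u * ρ * (1 - c - l - c * l) :=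
    mul_nonneg (mul_nonneg hu hρ.le) (by linarith [h.kp.c1])
  have e1 : s * (1 / 2 - l) - c * (ρ * (1 - c - l)) = c * (l * ρ) := by
    linear_combination c * hls - s / 2 * hlc
  have e1u : u * (s * (1 / 2 - l) - c * (ρ * (1 - c - l))) = u * (c * (l * ρ)) := by rw [e1]
  apply hw
  refine ⟨(ball_pos hn ?_).le, ball_leg1 h.kp hn ?_, ball_leg2 h.kp hn ?_⟩
  · rw [lerp1, oo1]; linarith
  · rw [lerp1, oo1, lerp0, oo0]; linarith
  · rw [lerp1, oo1, lerp0, oo0]; linarith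

theorem dist_tooth (h : RP l c s ρ) {x : Plane} (hx : x ∈ BB l c s) :
    dist x (oo l c ρ) ≤ l * ρ := by
  obtain ⟨y0, x1, x2⟩ := hx
  have hρ := h.pos
  have hl := h.kp.lpos
  have hs := h.kp.s0
  have hc := h.kp.c0
  have hcs := h.kp.cs
  have hls := h.ls
  have hlc := h.kp.lc
  have hrs := h.rs
  apply dist_le_of (by positivity)
  rw [oo0, oo1]
  have hy : x 1 ≤ l * s := by
    refine le_of_mul_le_mul_left ?_ hc
    have e : s * (1 - 2 * l) = 2 * (c * (l * s)) := by linear_combination (-s) * hlc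
    linarith
  have hX : (s * (x 0 - 1 / 2)) ^ 2 ≤ (s * (l * c) - c * x 1) ^ 2 := by
    have em : s * (1 / 2 - l) = s * (l * c) := by linear_combination (- s / 2) * hlc
    apply sq_le_sq'
    · linarith
    · linarith
  have hY := mul_nonneg y0 (sub_nonneg.2 hy)
  have e1 : ρ * (1 - c - l) = l * s - l * ρ := by linear_combination - hls
  rw [e1]
  have key : s ^ 2 * ((x 0 - 1 / 2) ^ 2 + (x 1 - (l * s - l * ρ)) ^ 2) ≤ s ^ 2 * (l * ρ) ^ 2 := by
    have e2 : (s * (l * c) - c * x 1) ^ 2 + s ^ 2 * (x 1 - (l * s - l * ρ)) ^ 2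
        - s ^ 2 * (l * ρ) ^ 2 = - (x 1 * (l * s - x 1)) := by
      have e3 : s ^ 2 * ρ = s / 2 := by linear_combination s / 2 * hrs
      linear_combination (l * s - x 1) ^ 2 * hcs - 2 * l * (l * s - x 1) * e3
    nlinarith
  exact le_of_mul_le_mul_left key (by positivity)

theorem ball_TRo {q w : Plane} {r : ℝ} (hd : dist q w < r) (h0 : q 1 + r ≤ 0)
    (h1 : 2 * r ≤ Real.sqrt 3 * q 0 + q 1) (h2 : 2 * r ≤ Real.sqrt 3 * (1 - q 0) + q 1) :
    w ∈ TRo := by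
  have h3 := sqrt3_sq
  refine ⟨ball_neg hd h0, ?_, ?_⟩
  · linarith [lin_bound (a := Real.sqrt 3 / 2) (b := 1 / 2) (by linarith) w q]
  · linarith [lin_bound (a := - (Real.sqrt 3 / 2)) (b := 1 / 2) (by linarith) w q]

theorem d_le (h : RP l c s ρ) : c * ρ ≤ Real.sqrt 3 / 6 := by
  have h3 := sqrt3_sq
  have hs3 := sqrt3_pos
  have hs := h.kp.s0; have hc := h.kp.c0; have hρ := h.pos
  have hge : Real.sqrt 3 * c ≤ s := by
    apply (sq_le_sq₀ (by positivity) hs.le).1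
    have := s2_ge h.kp
    rw [mul_pow, h3]; exact this
  have h4 : 2 * (Real.sqrt 3 * c) * ρ ≤ 1 := by
    rw [← h.rs]
    exact mul_le_mul_of_nonneg_right (by linarith) hρ.le
  nlinarith

theorem gg0 : gg 0 = 1 / 2 := pt_zero _ _
theorem gg1 : gg 1 = - (Real.sqrt 3 / 6) := pt_one _ _

theorem dist_last (h : RP l c s ρ) : dist (PP c ρ) gg ≤ Real.sqrt 3 / 6 - c * ρ := by
  have := d_le h
  apply dist_le_of (by linarith)
  rw [PP0, PP1, gg0, gg1]
  apply le_of_eq; ring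

theorem loc_last (h : RP l c s ρ) {w : Plane} (hw : w ∉ TRo) {u : ℝ} (hu : 0 ≤ u) (hu1 : u ≤ 1) :
    c * (ρ + u * (Real.sqrt 3 / 6 - c * ρ)) ≤ dist (PP c ρ + u • (gg - PP c ρ)) w := by
  by_contra hn; push Not at hn
  have hd := d_le h
  have hls := h.ls
  have hc := h.kp.c0
  have hc1 := h.kp.c1
  have a := mul_nonneg hu (sub_nonneg.2 hd)
  have b := mul_nonneg (sub_nonneg.2 hu1) (sub_nonneg.2 hd)
  have e := mul_nonneg (show 0 ≤ 1 - c by linarith) a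
  apply hw
  refine ball_TRo hn ?_ ?_ ?_
  · rw [lerp1, PP1, gg1]; linarith
  · rw [lerp1, PP1, gg1, lerp0, PP0, gg0]; linarith
  · rw [lerp1, PP1, gg1, lerp0, PP0, gg0]; linarith

theorem dist_TR {x : Plane} (hx : x ∈ TR) : dist x gg ≤ Real.sqrt 3 / 3 := by
  have h3 := sqrt3_sq
  have hs3 := sqrt3_pos
  obtain ⟨y0, x1, x2⟩ := hx
  apply dist_le_of (by positivity)
  rw [gg0, gg1]
  have hX : (Real.sqrt 3 * (x 0 - 1 / 2)) ^ 2 ≤ (Real.sqrt 3 / 2 + x 1) ^ 2 := by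
    apply sq_le_sq'
    · linarith
    · linarith
  have hY : 0 ≤ (- x 1) * (Real.sqrt 3 / 2 + x 1) := mul_nonneg (by linarith) (by linarith)
  nlinarith

theorem loc_TR (h : KP l c s) {x w : Plane} (hx : x ∈ TR) (hw : w ∉ TRo) {u : ℝ} (hu : 0 ≤ u)
    (hu1 : u ≤ 1) : c * (u * (Real.sqrt 3 / 3)) ≤ dist (x + u • (gg - x)) w := by
  by_contra hn; push Not at hn
  have h3 := sqrt3_sq
  have hs3 := sqrt3_pos
  obtain ⟨y0, x1, x2⟩ := hx
  have hu' : 0 ≤ 1 - u := by linarith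
  have hr : c * (u * (Real.sqrt 3 / 3)) ≤ 1 / 2 * (u * (Real.sqrt 3 / 3)) :=
    mul_le_mul_of_nonneg_right h.c1 (by positivity)
  have a0 := mul_nonneg hu' (neg_nonneg.2 y0)
  have a1 := mul_nonneg hu' x1
  have a2 := mul_nonneg hu' x2
  apply hw
  refine ball_TRo hn ?_ ?_ ?_
  · rw [lerp1, gg1]; linarith
  · rw [lerp1, gg1, lerp0, gg0]; linarith
  · rw [lerp1, gg1, lerp0, gg0]; linarith

end

/-! ### Assembly -/

section
variable {l c s ρ : ℝ} {K : Set Plane}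

theorem JP.station (h : RP l c s ρ) (hK : IsKoch l K) {S : Plane → Plane} {r : ℝ}
    (hS : Adm l S r) (i : Fin 4) {x : Plane}
    (hx : JP (snowflakeBoundary K) c x (l * r * ρ) (S (kochF l i (PP c ρ)))) :
    JP (snowflakeBoundary K) c x (r * ρ) (S (PP c ρ)) := by
  have hsim := hS.sim h.kp
  have hr := hsim.1
  have hρ := h.pos
  have hl2 := h.kp.l2
  have e : r * ρ - l * r * ρ = r * (ρ - l * ρ) := by ring
  have hpos : 0 ≤ r * (ρ - l * ρ) := mul_nonneg hr.le (by nlinarith)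
  refine hx.trans (by linarith) ?_ ?_
  · rw [hsim.dist_map, e]
    exact mul_le_mul_of_nonneg_left (dist_step h i) hr.le
  · intro u hu hu1 z hz
    obtain ⟨w, rfl⟩ := hsim.surjective z
    rw [← hsim.affine, hsim.dist_map, e]
    have hw : w ∉ EE c s := fun hw => hS.EE_free h.kp hK w hw hz
    have hw' : w ∉ BP l c s := fun hw => hS.BP_free h.kp hK hw hz
    have := mul_le_mul_of_nonneg_left (loc_step h i hw hw' hu hu1) hr.le
    refine le_trans (le_of_eq ?_) this
    ring

theorem JP.chain (h : RP l c s ρ) (hK : IsKoch l K) {S : Plane → Plane} {r : ℝ}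
    (hS : Adm l S r) {x : Plane} (hx : JP (snowflakeBoundary K) c x (r * ρ) (S (PP c ρ))) :
    ∃ t, JP (snowflakeBoundary K) c x t gg := by
  induction hS with
  | base i =>
    rw [one_mul] at hx
    refine ⟨ρ + (Real.sqrt 3 / 6 - c * ρ), ?_⟩
    have e : ρ + (Real.sqrt 3 / 6 - c * ρ) - ρ = Real.sqrt 3 / 6 - c * ρ := by ring
    refine hx.trans (by linarith [d_le h]) ?_ ?_
    · rw [e, ← G_gg i, (simG i).dist_map, one_mul]
      exact dist_last h
    · intro u hu hu1 z hz
      obtain ⟨w, rfl⟩ := (simG i).surjective z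
      rw [e, ← G_gg i, ← (simG i).affine, (simG i).dist_map, one_mul]
      exact loc_last h (fun hw => bd_TRo h.kp hK hz ((G_TRo i).2 hw)) hu hu1
  | step i hS ih => exact ih (hx.station h hK hS i)

theorem JP.tooth (h : RP l c s ρ) (hK : IsKoch l K) {S : Plane → Plane} {r : ℝ}
    (hS : Adm l S r) {p : Plane} (hp : p ∈ BB l c s) :
    ∃ t, JP (snowflakeBoundary K) c (S p) t gg := by
  have hsim := hS.sim h.kp
  have hr := hsim.1
  have hρ := h.pos
  have hl := h.kp.lpos
  apply JP.chain h hK (hS.step 1)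
  rw [Function.comp_apply, F1_P h]
  refine (JP.refl _ _ _).trans (by positivity) ?_ ?_
  · rw [hsim.dist_map]
    have := mul_le_mul_of_nonneg_left (dist_tooth h hp) hr.le
    linarith
  · intro u hu hu1 z hz
    obtain ⟨w, rfl⟩ := hsim.surjective z
    rw [← hsim.affine, hsim.dist_map]
    have hw : w ∉ BP l c s := fun hw => hS.BP_free h.kp hK hw hz
    have := mul_le_mul_of_nonneg_left (loc_tooth h hp hw hu hu1) hr.le
    refine le_trans (le_of_eq ?_) this
    ring

theorem JP.stage (h : RP l c s ρ) (hK : IsKoch l K) (n : ℕ) : ∀ (S : Plane → Plane) (r : ℝ),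
    Adm l S r → ∀ p ∈ DD l c s n, ∃ t, JP (snowflakeBoundary K) c (S p) t gg := by
  induction n with
  | zero => intro S r _ p hp; exact hp.elim
  | succ n ih =>
    rintro S r hS p (hp | hp)
    · exact JP.tooth h hK hS hp
    · obtain ⟨i, q, hq, rfl⟩ := mem_iUnion.1 hp
      exact ih _ _ (hS.step i) q hq

theorem JP.center (h : KP l c s) (hK : IsKoch l K) {x : Plane} (hx : x ∈ TR) :
    ∃ t, JP (snowflakeBoundary K) c x t gg := by
  refine ⟨Real.sqrt 3 / 3, (JP.refl _ _ _).trans (by positivity) ?_ ?_⟩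
  · rw [sub_zero]; exact dist_TR hx
  · intro u hu hu1 z hz
    rw [zero_add, sub_zero]
    exact loc_TR h hx (bd_TRo h hK hz) hu hu1

theorem CC_near (h : KP l c s) (hK : IsKoch l K) (n : ℕ) : ∀ p ∈ CC l c s n,
    p ∈ DD l c s n ∨ ∃ z ∈ K, dist p z ≤ 2 * l ^ n := by
  induction n with
  | zero =>
    intro p hp
    exact Or.inr ⟨e0, e0_mem_K h hK, by simpa using dist_TT h hp (e0_mem_TT h)⟩
  | succ n ih =>
    rintro p (hp | hp)
    · exact Or.inl (Or.inl hp)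
    · obtain ⟨i, q, hq, rfl⟩ := mem_iUnion.1 hp
      rcases ih q hq with h1 | ⟨z, hz, hd⟩
      · exact Or.inl (Or.inr (mem_iUnion.2 ⟨i, q, h1, rfl⟩))
      · refine Or.inr ⟨kochF l i z, hK.map i hz, ?_⟩
        rw [(h.sim i).dist_map, pow_succ]
        have := mul_le_mul_of_nonneg_left hd h.lpos.le
        linarith

theorem JP.exists (h : RP l c s ρ) (hK : IsKoch l K) {x : Plane} (hx : x ∉ snowflakeBoundary K)
    (hX : ∀ n, x ∈ XX l c s n) : ∃ t, JP (snowflakeBoundary K) c x t gg := by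
  have hδ : 0 < infDist x (snowflakeBoundary K) :=
    ((isClosed_bd hK).notMem_iff_infDist_pos (bd_ne hK)).1 hx
  obtain ⟨n, hn⟩ := exists_pow_lt_of_lt_one (half_pos hδ) (show l < 1 by linarith [h.kp.l2])
  rcases hX n with h1 | h1
  · exact JP.center h.kp hK h1
  · obtain ⟨i, q, hq, rfl⟩ := mem_iUnion.1 h1
    rcases CC_near h.kp hK n q hq with h2 | ⟨z, hz, hd⟩
    · exact JP.stage h hK n _ _ (Adm.base i) q h2
    · exfalso
      have h3 : infDist (kochG i q) (snowflakeBoundary K) ≤ dist (kochG i q) (kochG i z) :=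
        infDist_le_dist_of_mem (mem_bd.2 ⟨i, z, hz, rfl⟩)
      rw [(simG i).dist_map, one_mul] at h3
      linarith

/-- The frontier of a component of the complement of a closed set lies in this closed set. -/
theorem frontier_component {A : Set Plane} (hA : IsClosed A) {x : Plane} :
    frontier (connectedComponentIn Aᶜ x) ⊆ A := by
  intro z hz
  by_contra hzA
  by_cases hx : x ∈ Aᶜ
  · have hop : IsOpen (connectedComponentIn Aᶜ x) := hA.isOpen_compl.connectedComponentIn
    rw [hop.frontier_eq] at hz
    apply hz.2
    have hpre : IsPreconnected (insert z (connectedComponentIn Aᶜ x)) :=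
      isPreconnected_connectedComponentIn.subset_closure (subset_insert _ _)
        (insert_subset hz.1 subset_closure)
    apply hpre.subset_connectedComponentIn (mem_insert_of_mem _ (mem_connectedComponentIn hx)) _
      (mem_insert _ _)
    exact insert_subset hzA (connectedComponentIn_subset _ _)
  · rw [connectedComponentIn_eq_empty hx, frontier_empty] at hz
    exact hz

theorem component_sub_XX (h : KP l c s) (hK : IsKoch l K) {x₁ x : Plane}
    (hb : Bornology.IsBounded (connectedComponentIn (snowflakeBoundary K)ᶜ x₁))
    (hx : x ∈ connectedComponentIn (snowflakeBoundary K)ᶜ x₁) (n : ℕ) : x ∈ XX l c s n := by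
  by_contra hn
  have hcl := isClosed_XX h n
  have hsub : connectedComponentIn (XX l c s n)ᶜ x ⊆
      connectedComponentIn (snowflakeBoundary K)ᶜ x₁ := by
    rw [connectedComponentIn_eq hx]
    exact connectedComponentIn_mono x (compl_subset_compl.2 (bd_XX h hK n))
  have := full_XX h n _ (hcl.isOpen_compl.connectedComponentIn)
    isPreconnected_connectedComponentIn (hb.subset hsub) (frontier_component hcl)
    (disjoint_left.2 fun z hz hz' => connectedComponentIn_subset _ _ hz hz')
  have hm : x ∈ connectedComponentIn (XX l c s n)ᶜ x := mem_connectedComponentIn hn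
  rw [this] at hm
  exact hm

theorem john_of_JP {Γ : Set Plane} {J : ℝ} (hJ : 0 < J) {x₁ x y : Plane}
    {t : ℝ} (hx₁ : x ∈ connectedComponentIn Γᶜ x₁)
    (hb : Bornology.IsBounded (connectedComponentIn Γᶜ x₁)) (hΓ : IsClosed Γ) (h : JP Γ J x t y) :
    y ∈ connectedComponentIn Γᶜ x₁ ∧ ∃ (ℓ : ℝ) (γ : ℝ → Plane), 0 ≤ ℓ ∧
    LipschitzOnWith 1 γ (Set.Icc 0 ℓ) ∧ γ 0 = x ∧ γ ℓ = y ∧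
    (∀ t ∈ Set.Icc (0:ℝ) ℓ, γ t ∈ connectedComponentIn Γᶜ x₁ ∧
      J * t ≤ Metric.infDist (γ t) (frontier (connectedComponentIn Γᶜ x₁))) := by
  obtain ⟨ht, γ, hγ, hγ0, hγt, hγz⟩ := h
  have hsub : γ '' Icc 0 t ⊆ connectedComponentIn Γᶜ x₁ := by
    rw [connectedComponentIn_eq hx₁]
    apply (isPreconnected_Icc.image _ hγ.continuousOn).subset_connectedComponentIn
      ⟨0, ⟨le_rfl, ht⟩, hγ0⟩
    rintro _ ⟨τ, hτ, rfl⟩ hz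
    rcases hτ.1.eq_or_lt with h0 | h0
    · rw [← h0, hγ0] at hz
      exact connectedComponentIn_subset _ _ hx₁ hz
    · have := hγz τ hτ _ hz
      rw [dist_self] at this
      exact absurd this (not_le.2 (mul_pos hJ h0))
  have hfr : (frontier (connectedComponentIn Γᶜ x₁)).Nonempty := by
    rw [nonempty_frontier_iff]
    refine ⟨⟨x, hx₁⟩, fun hu => ?_⟩
    rw [hu] at hb
    exact NormedSpace.unbounded_univ ℝ Plane hb
  refine ⟨hsub ⟨t, ⟨ht, le_rfl⟩, hγt⟩, t, γ, ht, hγ, hγ0, hγt, fun τ hτ => ⟨hsub ⟨τ, hτ, rfl⟩, ?_⟩⟩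
  rw [le_infDist hfr]
  intro z hz
  exact hγz τ hτ z (frontier_component hΓ hz)

end


/-- **The snowflake domain is John.** The bounded connected component `Ω` of the
complement of the snowflake boundary built from the von Koch curve with parameter
`l ∈ [1/3,1/2)` is a `((1/2-l)/l)`-John domain. -/
theorem snowflake_isJohnDomain (l : ℝ) (hl1 : 1/3 ≤ l) (hl2 : l < 1/2)
    (K : Set Plane) (hne : K.Nonempty) (hcomp : IsCompact K)
    (hK : K = kochF l 0 '' K ∪ kochF l 1 '' K ∪ kochF l 2 '' K ∪ kochF l 3 '' K)
    (Ω : Set Plane) (hbdd : Bornology.IsBounded Ω)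
    (hΩ : ∃ x ∈ (snowflakeBoundary K)ᶜ, Ω = connectedComponentIn (snowflakeBoundary K)ᶜ x) :
    IsJohnDomain Ω ((1/2 - l) / l) := by
  obtain ⟨x₁, hx₁, rfl⟩ := hΩ
  have h := KP.mk' hl1 hl2
  have hK' : IsKoch l K := ⟨hne, hcomp, hK⟩
  have hR : RP l _ _ (1 / (2 * Real.sqrt (1 - ((1 / 2 - l) / l) ^ 2))) :=
    ⟨h, mul_one_div_cancel (mul_pos two_pos h.s0).ne'⟩
  have hΓ := isClosed_bd hK'
  have key : ∀ x ∈ connectedComponentIn (snowflakeBoundary K)ᶜ x₁,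
      ∃ t, JP (snowflakeBoundary K) ((1 / 2 - l) / l) x t gg := fun x hx =>
    JP.exists hR hK' (connectedComponentIn_subset _ _ hx) (component_sub_XX h hK' hbdd hx)
  have hm := mem_connectedComponentIn hx₁
  obtain ⟨t₁, ht₁⟩ := key x₁ hm
  refine ⟨gg, (john_of_JP h.c0 hm hbdd hΓ ht₁).1, fun x hx => ?_⟩
  obtain ⟨t, ht⟩ := key x hx
  exact (john_of_JP h.c0 hx hbdd hΓ ht).2
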